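/- arXiv:2007.10475 — 6 statements merged into one kernel-verified Lean document; each statement's English description precedes it below -/
import Mathlib

section
/- (Gagliardo–Nirenberg interpolation) Let $I=(a,b)$ be a bounded interval, $1 \le q < \infty$ and $1 \le r \le \infty$. Then there exists a constant $C = C(q,r) > 0$, independent of $I$, such that for every function $u$ continuously differentiable on $[a,b]$, one has $\|u\|_{L^\infty(I)} \le C\left(1 + \frac{1}{|I|}\right) \left(\|u\|_{L^r(I)} + \|u'\|_{L^r(I)}\right)^{\delta} \|u\|_{L^q(I)}^{1-\delta}$, where $0 < \delta \le 1$ is defined by $\delta\left(\frac{1}{q} + 1 - \frac{1}{r}\right) = \frac{1}{q}$. -/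
open MeasureTheory Set
open scoped ENNReal

open Filter Topology

/-!
For every `x ∈ [a, b]` and every length `l ≤ b - a`, choose a subinterval `J ∋ x` of length `l`.
Averaging `|u x| ≤ |u y| + ∫_J |u'|` over `y ∈ J`, with Hölder's inequality for the last term, gives
`|u x| ≤ ‖u‖_q * l ^ (-1 / q) + ‖u'‖_r * l ^ (1 - 1 / r)`.
The relation defining `δ` says that the geometric mean of the two terms with weights `1 - δ` and `δ`
is independent of `l`, so it suffices to take the `l` for which they are equal. If that `l` exceeds
`b - a`, take `l = b - a` instead: the first term then dominates, and the second one is compensated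
by the same estimate with `q = r`, which bounds `|u x|` by
`(1 + 1 / |I|) * ‖u‖_{W^{1,r}} * |I| ^ (1 - 1 / r)`.
-/

section Interpolation

variable {M W Q D l L : ℝ≥0∞} {k s δ : ℝ}

theorem le_rpow_mul_rpow_one_sub {X Y : ℝ≥0∞} (hδ0 : 0 ≤ δ) (hδ1 : δ ≤ 1) (hX : M ≤ X)
    (hY : M ≤ Y) : M ≤ X ^ δ * Y ^ (1 - δ) :=
  calc M = M ^ δ * M ^ (1 - δ) := by
        rw [← ENNReal.rpow_add_of_nonneg _ _ hδ0 (sub_nonneg.2 hδ1), add_sub_cancel,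
          ENNReal.rpow_one]
    _ ≤ X ^ δ * Y ^ (1 - δ) := by gcongr

theorem mul_rpow_rpow_mul_mul_rpow_neg_rpow (hδ0 : 0 ≤ δ) (hδ1 : δ ≤ 1) (hδ : δ * (k + s) = k)
    (hl0 : l ≠ 0) (hl : l ≠ ∞) :
    (W * l ^ s) ^ δ * (Q * l ^ (-k)) ^ (1 - δ) = W ^ δ * Q ^ (1 - δ) := by
  have hexp : s * δ + -k * (1 - δ) = 0 := by linear_combination hδ
  rw [ENNReal.mul_rpow_of_nonneg _ _ hδ0, ENNReal.mul_rpow_of_nonneg _ _ (sub_nonneg.2 hδ1),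
    mul_mul_mul_comm, ← ENNReal.rpow_mul, ← ENNReal.rpow_mul, ← ENNReal.rpow_add _ _ hl0 hl, hexp,
    ENNReal.rpow_zero, mul_one]

theorem exists_le_mul_rpow_le_mul_rpow_neg (hks : 0 < k + s) (hW0 : W ≠ 0) (hW : W ≠ ∞)
    (hQ0 : Q ≠ 0) (hQ : Q ≠ ∞) (hL0 : L ≠ 0) :
    ∃ l ≤ L, l ≠ 0 ∧ l ≠ ∞ ∧ W * l ^ s ≤ Q * l ^ (-k) ∧ (l = L ∨ W * l ^ s = Q * l ^ (-k)) := by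
  have hQW0 : Q / W ≠ 0 := ENNReal.div_ne_zero.2 ⟨hQ0, hW⟩
  have hQW : Q / W ≠ ∞ := ENNReal.div_ne_top hQ hW0
  set l₀ := (Q / W) ^ (k + s)⁻¹ with hl₀
  have hl₀_zero : l₀ ≠ 0 := by simp [hl₀, hQW0, hQW]
  have hl₀_top : l₀ ≠ ∞ := by simp [hl₀, hQW0, hQW]
  have hW_mul {l : ℝ≥0∞} (hl0 : l ≠ 0) (hl : l ≠ ∞) :
      W * l ^ s = W * l ^ (k + s) * l ^ (-k) := by
    rw [mul_assoc, ← ENNReal.rpow_add _ _ hl0 hl]; ring_nf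
  have hQ_eq : W * l₀ ^ (k + s) = Q := by
    rw [hl₀, ENNReal.rpow_inv_rpow hks.ne', ENNReal.mul_div_cancel hW0 hW]
  rcases le_total l₀ L with h | h
  · have hbal : W * l₀ ^ s = Q * l₀ ^ (-k) := by rw [hW_mul hl₀_zero hl₀_top, hQ_eq]
    exact ⟨l₀, h, hl₀_zero, hl₀_top, hbal.le, .inr hbal⟩
  · have hL : L ≠ ∞ := ne_top_of_le_ne_top hl₀_top h
    refine ⟨L, le_rfl, hL0, hL, ?_, .inl rfl⟩
    rw [hW_mul hL0 hL, ← hQ_eq]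
    gcongr

theorem le_rpow_mul_rpow_of_forall_le_of_ne_zero (hδ0 : 0 ≤ δ) (hδ1 : δ ≤ 1) (hks : 0 < k + s)
    (hδ : δ * (k + s) = k) (hL0 : L ≠ 0) (hD : 1 ≤ D) (hW0 : W ≠ 0) (hW : W ≠ ∞) (hQ0 : Q ≠ 0)
    (hQ : Q ≠ ∞) (hM : ∀ l ≠ 0, l ≤ L → M ≤ Q * l ^ (-k) + W * l ^ s)
    (hML : M ≤ D * (W * L ^ s)) :
    M ≤ 2 * D * (W ^ δ * Q ^ (1 - δ)) := by
  obtain ⟨l, hlL, hl0, hl, hle, hlast⟩ :=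
    exists_le_mul_rpow_le_mul_rpow_neg hks hW0 hW hQ0 hQ hL0 (s := s) (k := k)
  have hM2 : M ≤ 2 * (Q * l ^ (-k)) := by
    rw [two_mul]; exact (hM l hl0 hlL).trans (by gcongr)
  have hMQ : M ≤ 2 * D * Q * l ^ (-k) := by
    rw [mul_assoc]; exact hM2.trans (by gcongr; exact le_mul_of_one_le_right' hD)
  have hMW : M ≤ 2 * D * W * l ^ s := by
    rcases hlast with rfl | hbal
    · calc M ≤ 1 * (D * (W * l ^ s)) := by rwa [one_mul]
        _ ≤ 2 * (D * (W * l ^ s)) := by gcongr; exact one_le_two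
        _ = 2 * D * W * l ^ s := by ring
    · rwa [mul_assoc, hbal, ← mul_assoc]
  calc M ≤ (2 * D * W * l ^ s) ^ δ * (2 * D * Q * l ^ (-k)) ^ (1 - δ) :=
        le_rpow_mul_rpow_one_sub hδ0 hδ1 hMW hMQ
    _ = (2 * D * W) ^ δ * (2 * D * Q) ^ (1 - δ) :=
        mul_rpow_rpow_mul_mul_rpow_neg_rpow hδ0 hδ1 hδ hl0 hl
    _ = (2 * D) ^ (δ + (1 - δ)) * (W ^ δ * Q ^ (1 - δ)) := by
        rw [ENNReal.rpow_add_of_nonneg _ _ hδ0 (sub_nonneg.2 hδ1),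
          ENNReal.mul_rpow_of_nonneg _ _ hδ0, ENNReal.mul_rpow_of_nonneg _ _ (sub_nonneg.2 hδ1)]
        ring
    _ = 2 * D * (W ^ δ * Q ^ (1 - δ)) := by rw [add_sub_cancel, ENNReal.rpow_one]

theorem tendsto_rpow_add_mul_rpow_add (hδ0 : 0 ≤ δ) (hδ1 : δ ≤ 1) (hW : W ≠ ∞) (hQ : Q ≠ ∞) :
    Tendsto (fun ε ↦ (W + ε) ^ δ * (Q + ε) ^ (1 - δ)) (𝓝 0) (𝓝 (W ^ δ * Q ^ (1 - δ))) := by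
  have hrpow (A : ℝ≥0∞) (p : ℝ) : Tendsto (fun ε ↦ (A + ε) ^ p) (𝓝 0) (𝓝 (A ^ p)) := by
    have hcont : Continuous fun ε ↦ (A + ε) ^ p :=
      ENNReal.continuous_rpow_const.comp (continuous_const.add continuous_id)
    simpa using hcont.tendsto 0
  exact ENNReal.Tendsto.mul (hrpow W δ)
    (.inr (ENNReal.rpow_ne_top_of_nonneg (sub_nonneg.2 hδ1) hQ)) (hrpow Q (1 - δ))
    (.inr (ENNReal.rpow_ne_top_of_nonneg hδ0 hW))

theorem le_rpow_mul_rpow_of_forall_le (hk : 0 ≤ k) (hs : 0 ≤ s) (hks : 0 < k + s)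
    (hδ : δ * (k + s) = k) (hL0 : L ≠ 0) (hD : 1 ≤ D) (hD' : D ≠ ∞) (hW : W ≠ ∞) (hQ : Q ≠ ∞)
    (hM : ∀ l ≠ 0, l ≤ L → M ≤ Q * l ^ (-k) + W * l ^ s) (hML : M ≤ D * (W * L ^ s)) :
    M ≤ 2 * D * (W ^ δ * Q ^ (1 - δ)) := by
  have hδ0 : 0 ≤ δ := nonneg_of_mul_nonneg_left (by rwa [hδ]) hks
  have hδ1 : δ ≤ 1 := le_of_mul_le_mul_right (by linarith) hks
  -- The balancing length exists only for nonzero `W` and `Q`, so add a small `ε` to both.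
  have hlim := ENNReal.Tendsto.const_mul (tendsto_rpow_add_mul_rpow_add hδ0 hδ1 hW hQ)
    (a := 2 * D) (.inr (ENNReal.mul_ne_top ENNReal.ofNat_ne_top hD'))
  refine ge_of_tendsto (hlim.mono_left (nhdsWithin_le_nhds (s := Ioi 0))) ?_
  filter_upwards [Ioo_mem_nhdsGT ENNReal.zero_lt_top] with ε ⟨hε0, hε⟩
  refine le_rpow_mul_rpow_of_forall_le_of_ne_zero hδ0 hδ1 hks hδ hL0 hD (by simp [hε0.ne'])
    (by simp [hW, hε.ne]) (by simp [hε0.ne']) (by simp [hQ, hε.ne])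
    (fun l hl0 hlL ↦ (hM l hl0 hlL).trans ?_) (hML.trans ?_) <;>
  gcongr <;> exact le_self_add

end Interpolation

theorem le_eLpNorm_mul_rpow_add_eLpNorm_mul_rpow {α ε : Type*} [MeasurableSpace α] [ENorm ε]
    {μ : Measure α} [IsFiniteMeasure μ] [NeZero μ] {u : α → ε} {g : α → ℝ≥0∞} {M p r : ℝ≥0∞}
    (hp : p ≠ 0) (hr : 1 ≤ r) (hg : AEStronglyMeasurable g μ)
    (hM : ∀ᵐ y ∂μ, M ≤ ‖u y‖ₑ + ∫⁻ t, g t ∂μ) :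
    M ≤ eLpNorm u p μ * μ univ ^ (-(1 / p.toReal)) +
      eLpNorm g r μ * μ univ ^ (1 - 1 / r.toReal) := by
  have hoelder : ∫⁻ t, g t ∂μ ≤ eLpNorm g r μ * μ univ ^ (1 - 1 / r.toReal) := by
    simpa [eLpNorm_one_eq_lintegral_enorm] using eLpNorm_le_eLpNorm_mul_rpow_measure_univ hr hg
  have haverage : (M - ∫⁻ t, g t ∂μ) * μ univ ^ (1 / p.toReal) ≤ eLpNorm u p μ :=
    calc (M - ∫⁻ t, g t ∂μ) * μ univ ^ (1 / p.toReal)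
        = eLpNorm (fun _ ↦ M - ∫⁻ t, g t ∂μ) p μ := by
          rw [eLpNorm_const _ hp (NeZero.ne μ), enorm_eq_self]
      _ ≤ eLpNorm u p μ := eLpNorm_mono_enorm_ae <| hM.mono fun _ hy ↦ tsub_le_iff_right.2 hy
  have hpow0 : μ univ ^ (1 / p.toReal) ≠ 0 := by simp [NeZero.ne μ]
  have hpow : μ univ ^ (1 / p.toReal) ≠ ∞ :=
    ENNReal.rpow_ne_top_of_nonneg (by positivity) (measure_ne_top μ univ)
  rw [← ENNReal.le_div_iff_mul_le (.inl hpow0) (.inl hpow), tsub_le_iff_right, div_eq_mul_inv,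
    ← ENNReal.rpow_neg] at haverage
  exact haverage.trans (by gcongr)

theorem exists_Icc_subset_Icc_volume_eq {a b x : ℝ} {l : ℝ≥0∞} (hx : x ∈ Icc a b)
    (hl : l ≤ volume (Icc a b)) :
    ∃ c d, Icc c d ⊆ Icc a b ∧ x ∈ Icc c d ∧ volume (Icc c d) = l := by
  rw [Real.volume_Icc] at hl
  have hl_top : l ≠ ∞ := ne_top_of_le_ne_top ENNReal.ofReal_ne_top hl
  have hlen : l.toReal ≤ b - a :=
    ENNReal.toReal_le_of_le_ofReal (sub_nonneg.2 (hx.1.trans hx.2)) hl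
  have hnonneg : 0 ≤ l.toReal := ENNReal.toReal_nonneg
  refine ⟨max a (x - l.toReal), max a (x - l.toReal) + l.toReal,
    Icc_subset_Icc (le_max_left _ _) ?_, ⟨max_le hx.1 (by linarith), ?_⟩, ?_⟩
  · rw [← le_sub_iff_add_le]
    exact max_le (by linarith) (by linarith [hx.2])
  · linarith [le_max_right a (x - l.toReal)]
  · rw [Real.volume_Icc, add_sub_cancel_left, ENNReal.ofReal_toReal hl_top]

/-- `g` is an upper gradient of `u` on the set `s` of real numbers, in the sense of analysis on
metric spaces: the distance between two values of `u` is at most the integral of `g` between the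
two points. It stands in for the norm of `u'`, so that `u` need not be `C¹`, or even differentiable.
Only `x ≤ y` is considered, since `Icc x y` is the segment between the points in that case. -/
def IsUpperGradientOn {X : Type*} [PseudoEMetricSpace X] (g : ℝ → ℝ≥0∞) (u : ℝ → X) (s : Set ℝ) :
    Prop :=
  ∀ ⦃x⦄, x ∈ s → ∀ ⦃y⦄, y ∈ s → x ≤ y → edist (u x) (u y) ≤ ∫⁻ t in Icc x y, g t

theorem isUpperGradientOn_enorm_derivWithin {E : Type*} [NormedAddCommGroup E] [NormedSpace ℝ E]
    {u : ℝ → E} {a b : ℝ} (hu : ContDiffOn ℝ 1 u (Icc a b)) :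
    IsUpperGradientOn (fun t ↦ ‖derivWithin u (Icc a b) t‖ₑ) u (Icc a b) := by
  intro x hx y hy hxy
  have hsub : Icc x y ⊆ Icc a b := Icc_subset_Icc hx.1 hy.2
  rw [edist_comm, edist_eq_enorm_sub]
  refine (enorm_sub_le_lintegral_deriv_of_contDiffOn_Icc (hu.mono hsub) hxy).trans_eq ?_
  rw [← restrict_Ioo_eq_restrict_Icc]
  refine setLIntegral_congr_fun measurableSet_Ioo fun t ht ↦ ?_
  rw [derivWithin_of_mem_nhds (Filter.mem_of_superset (Icc_mem_nhds ht.1 ht.2) hsub)]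

theorem memLp_enorm_derivWithin {E : Type*} [NormedAddCommGroup E] [NormedSpace ℝ E] {u : ℝ → E}
    {a b : ℝ} (hab : a < b) (hu : ContDiffOn ℝ 1 u (Icc a b)) (p : ℝ≥0∞) :
    MemLp (fun t ↦ ‖derivWithin u (Icc a b) t‖ₑ) p (volume.restrict (Ioo a b)) := by
  have hcont : ContinuousOn (derivWithin u (Icc a b)) (Icc a b) :=
    hu.continuousOn_derivWithin (uniqueDiffOn_Icc hab) le_rfl
  obtain ⟨C, hC⟩ := isCompact_Icc.exists_bound_of_continuousOn hcont
  rw [restrict_Ioo_eq_restrict_Icc]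
  exact MemLp.enorm <| .of_bound
    (hcont.aestronglyMeasurable_of_isCompact isCompact_Icc measurableSet_Icc) C
    (ae_restrict_of_forall_mem measurableSet_Icc hC)

namespace IsUpperGradientOn

variable {E : Type*} [SeminormedAddCommGroup E] {g : ℝ → ℝ≥0∞} {u : ℝ → E} {a b : ℝ}
  {p r : ℝ≥0∞}

theorem mono {s t : Set ℝ} (hu : IsUpperGradientOn g u t) (hst : s ⊆ t) :
    IsUpperGradientOn g u s :=
  fun _ hx _ hy hxy ↦ hu (hst hx) (hst hy) hxy

theorem enorm_le_enorm_add_lintegral {x y : ℝ} (hu : IsUpperGradientOn g u (Icc a b))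
    (hx : x ∈ Icc a b) (hy : y ∈ Icc a b) : ‖u x‖ₑ ≤ ‖u y‖ₑ + ∫⁻ t in Icc a b, g t := by
  have hdist : edist (u x) (u y) ≤ ∫⁻ t in Icc a b, g t := by
    rcases le_total x y with hxy | hyx
    · exact (hu hx hy hxy).trans (lintegral_mono_set (Icc_subset_Icc hx.1 hy.2))
    · rw [edist_comm]
      exact (hu hy hx hyx).trans (lintegral_mono_set (Icc_subset_Icc hy.1 hx.2))
  calc ‖u x‖ₑ = edist (u x) 0 := (edist_zero_right _).symm
    _ ≤ edist (u y) 0 + edist (u x) (u y) := by rw [add_comm]; exact edist_triangle _ _ _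
    _ ≤ ‖u y‖ₑ + ∫⁻ t in Icc a b, g t := by rw [edist_zero_right]; gcongr

theorem enorm_le_eLpNorm_mul_rpow_add {x : ℝ} {l : ℝ≥0∞} (hu : IsUpperGradientOn g u (Icc a b))
    (hg : AEStronglyMeasurable g (volume.restrict (Icc a b))) (hp : p ≠ 0) (hr : 1 ≤ r)
    (hx : x ∈ Icc a b) (hl0 : l ≠ 0) (hl : l ≤ volume (Icc a b)) :
    ‖u x‖ₑ ≤ eLpNorm u p (volume.restrict (Icc a b)) * l ^ (-(1 / p.toReal)) +
      eLpNorm g r (volume.restrict (Icc a b)) * l ^ (1 - 1 / r.toReal) := by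
  obtain ⟨c, d, hsub, hxcd, rfl⟩ := exists_Icc_subset_Icc_volume_eq hx hl
  have hmono : volume.restrict (Icc c d) ≤ volume.restrict (Icc a b) :=
    Measure.restrict_mono_set _ hsub
  have : NeZero (volume.restrict (Icc c d)) := ⟨by simpa [Measure.restrict_eq_zero] using hl0⟩
  have hlocal := le_eLpNorm_mul_rpow_add_eLpNorm_mul_rpow hp hr (hg.mono_measure hmono)
    (ae_restrict_of_forall_mem measurableSet_Icc fun y hy ↦
      (hu.mono hsub).enorm_le_enorm_add_lintegral hxcd hy)
  rw [Measure.restrict_apply_univ] at hlocal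
  exact hlocal.trans (by gcongr)

theorem enorm_le_one_add_inv_mul {x : ℝ} (hu : IsUpperGradientOn g u (Icc a b))
    (hg : AEStronglyMeasurable g (volume.restrict (Icc a b))) (hr : 1 ≤ r) (hab : a < b)
    (hx : x ∈ Icc a b) :
    ‖u x‖ₑ ≤ (1 + (volume (Icc a b))⁻¹) * ((eLpNorm u r (volume.restrict (Icc a b)) +
      eLpNorm g r (volume.restrict (Icc a b))) * volume (Icc a b) ^ (1 - 1 / r.toReal)) := by
  have hest := hu.enorm_le_eLpNorm_mul_rpow_add hg (zero_lt_one.trans_le hr).ne' hr hx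
    (by simpa using hab) le_rfl
  set A := eLpNorm u r (volume.restrict (Icc a b))
  set B := eLpNorm g r (volume.restrict (Icc a b))
  set L := volume (Icc a b) with hL
  have hpow : L ^ (-(1 / r.toReal)) = L⁻¹ * L ^ (1 - 1 / r.toReal) := by
    rw [← ENNReal.rpow_neg_one, ← ENNReal.rpow_add _ _ (by simpa [hL] using hab) (by simp [hL])]
    ring_nf
  calc ‖u x‖ₑ ≤ A * (L⁻¹ * L ^ (1 - 1 / r.toReal)) + B * L ^ (1 - 1 / r.toReal) := hpow ▸ hest
    _ = (L⁻¹ * A + 1 * B) * L ^ (1 - 1 / r.toReal) := by ring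
    _ ≤ ((1 + L⁻¹) * A + (1 + L⁻¹) * B) * L ^ (1 - 1 / r.toReal) := by
        gcongr
        exacts [le_add_self, le_self_add]
    _ = (1 + L⁻¹) * ((A + B) * L ^ (1 - 1 / r.toReal)) := by ring

theorem eLpNorm_ne_top (hu : IsUpperGradientOn g u (Icc a b)) (hab : a ≤ b) (hr : 1 ≤ r)
    (hg : MemLp g r (volume.restrict (Icc a b))) (p : ℝ≥0∞) :
    eLpNorm u p (volume.restrict (Icc a b)) ≠ ∞ := by
  have hg1 : ∫⁻ t in Icc a b, g t ≠ ∞ := by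
    simpa [eLpNorm_one_eq_lintegral_enorm] using (hg.mono_exponent hr).eLpNorm_ne_top
  have hbound : eLpNorm u p (volume.restrict (Icc a b)) ≤
      eLpNorm (fun _ ↦ ‖u a‖ₑ + ∫⁻ t in Icc a b, g t) p (volume.restrict (Icc a b)) :=
    eLpNorm_mono_enorm_ae <| ae_restrict_of_forall_mem measurableSet_Icc fun x hx ↦
      hu.enorm_le_enorm_add_lintegral hx (left_mem_Icc.2 hab)
  have hconst : ‖u a‖ₑ + ∫⁻ t in Icc a b, g t ≠ ∞ := ENNReal.add_ne_top.2 ⟨enorm_ne_top, hg1⟩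
  exact ne_top_of_le_ne_top (memLp_const_enorm hconst).eLpNorm_ne_top hbound

theorem enorm_le_rpow_mul_rpow {q : ℝ≥0∞} {δ x : ℝ} (hu : IsUpperGradientOn g u (Icc a b))
    (hq0 : q ≠ 0) (hq : q ≠ ∞) (hr : 1 ≤ r)
    (hδ : δ * (1 / q.toReal + 1 - 1 / r.toReal) = 1 / q.toReal) (hab : a < b)
    (hg : MemLp g r (volume.restrict (Icc a b))) (hx : x ∈ Icc a b) :
    ‖u x‖ₑ ≤ 2 * (1 + (volume (Icc a b))⁻¹) *
      ((eLpNorm u r (volume.restrict (Icc a b)) + eLpNorm g r (volume.restrict (Icc a b))) ^ δ *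
        eLpNorm u q (volume.restrict (Icc a b)) ^ (1 - δ)) := by
  have hk : 0 < 1 / q.toReal := one_div_pos.2 (ENNReal.toReal_pos hq0 hq)
  have hs : 0 ≤ 1 - 1 / r.toReal := by
    rw [one_div, ← ENNReal.toReal_inv, sub_nonneg, ← ENNReal.toReal_one]
    exact ENNReal.toReal_mono ENNReal.one_ne_top (ENNReal.inv_le_one.2 hr)
  have hL0 : volume (Icc a b) ≠ 0 := by simpa using hab
  have hW : eLpNorm u r (volume.restrict (Icc a b)) + eLpNorm g r (volume.restrict (Icc a b)) ≠ ∞ :=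
    ENNReal.add_ne_top.2 ⟨hu.eLpNorm_ne_top hab.le hr hg r, hg.eLpNorm_ne_top⟩
  refine le_rpow_mul_rpow_of_forall_le hk.le hs (by linarith) (by rwa [← add_sub_assoc]) hL0
    le_self_add (by simpa using hab) hW (hu.eLpNorm_ne_top hab.le hr hg q) (fun l hl0 hl ↦ ?_)
    (hu.enorm_le_one_add_inv_mul hg.aestronglyMeasurable hr hab hx)
  refine (hu.enorm_le_eLpNorm_mul_rpow_add hg.aestronglyMeasurable hq0 hr hx hl0 hl).trans ?_
  gcongr
  exact le_add_self

end IsUpperGradientOn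

theorem gagliardo_nirenberg_general {E : Type*} [SeminormedAddCommGroup E] {u : ℝ → E}
    {g : ℝ → ℝ≥0∞} {a b δ : ℝ} {q r : ℝ≥0∞} (hq0 : q ≠ 0) (hq : q ≠ ∞) (hr : 1 ≤ r)
    (hδ : δ * (1 / q.toReal + 1 - 1 / r.toReal) = 1 / q.toReal) (hab : a < b)
    (hg : MemLp g r (volume.restrict (Ioo a b))) (hu : IsUpperGradientOn g u (Icc a b)) :
    eLpNorm u ∞ (volume.restrict (Ioo a b)) ≤
      ENNReal.ofReal (2 * (1 + 1 / (b - a))) *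
        (eLpNorm u r (volume.restrict (Ioo a b)) + eLpNorm g r (volume.restrict (Ioo a b))) ^ δ *
        (eLpNorm u q (volume.restrict (Ioo a b))) ^ (1 - δ) := by
  have hlen : 0 < b - a := sub_pos.2 hab
  have hconst : ENNReal.ofReal (2 * (1 + 1 / (b - a))) = 2 * (1 + (volume (Icc a b))⁻¹) := by
    rw [Real.volume_Icc, ENNReal.ofReal_mul zero_le_two, ENNReal.ofReal_add zero_le_one
      (by positivity), one_div, ENNReal.ofReal_inv_of_pos hlen, ENNReal.ofReal_one,
      ENNReal.ofReal_ofNat]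
  rw [restrict_Ioo_eq_restrict_Icc] at hg ⊢
  rw [hconst, mul_assoc, eLpNorm_exponent_top]
  exact eLpNormEssSup_le_of_ae_enorm_bound <| ae_restrict_of_forall_mem measurableSet_Icc
    fun _ hx ↦ hu.enorm_le_rpow_mul_rpow hq0 hq hr hδ hab hg hx

/-- **Gagliardo–Nirenberg interpolation** (Proposition 3.6): for `1 ≤ q < ∞`, `1 ≤ r ≤ ∞`
there is a constant `C = C(q, r) > 0`, independent of the interval `I = (a, b)`, such that
for every `u` continuously differentiable on `[a, b]`,
`‖u‖_{L^∞(I)} ≤ C (1 + 1/|I|) ‖u‖_{W^{1,r}(I)}^δ ‖u‖_{L^q(I)}^{1-δ}`, where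
`δ (1/q + 1 - 1/r) = 1/q` and `‖u‖_{W^{1,r}} = ‖u‖_{L^r} + ‖u'‖_{L^r}`. -/
theorem gagliardo_nirenberg (q r : ℝ≥0∞) (hq : 1 ≤ q) (hq' : q ≠ ∞) (hr : 1 ≤ r)
    (δ : ℝ) (hδ0 : 0 < δ) (hδ1 : δ ≤ 1)
    (hδ : δ * (1 / q.toReal + 1 - 1 / r.toReal) = 1 / q.toReal) :
    ∃ C > (0:ℝ), ∀ (a b : ℝ), a < b → ∀ u : ℝ → ℝ, ContDiffOn ℝ 1 u (Icc a b) →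
      eLpNorm u ∞ (volume.restrict (Ioo a b)) ≤
        ENNReal.ofReal (C * (1 + 1 / (b - a))) *
          (eLpNorm u r (volume.restrict (Ioo a b)) +
            eLpNorm (derivWithin u (Icc a b)) r (volume.restrict (Ioo a b))) ^ δ *
          (eLpNorm u q (volume.restrict (Ioo a b))) ^ (1 - δ) :=
  ⟨2, two_pos, fun a b hab u hu ↦ by
    simpa only [eLpNorm_enorm] using gagliardo_nirenberg_general (zero_lt_one.trans_le hq).ne' hq'
      hr hδ hab (memLp_enorm_derivWithin hab hu r) (isUpperGradientOn_enorm_derivWithin hu)⟩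
end

section
/- Let $I=(a,b)$ be a bounded interval, $1 \le q < \infty$, $q \le p \le \infty$ and $1 \le r \le \infty$. Then there exists a constant $C = C(|I|,p,q,r) > 0$ such that for every function $u$ twice continuously differentiable on $[a,b]$ with $u(a)=u(b)=0$, one has $\|u'\|_{L^p(I)} \le C\, \|u''\|_{L^r(I)}^{\theta} \|u'\|_{L^q(I)}^{1-\theta}$, where $0 \le \theta \le 1$ is defined by $\theta\left(\frac{1}{q} + 1 - \frac{1}{r}\right) = \frac{1}{q} - \frac{1}{p}$. -/
open MeasureTheory Set
open scoped ENNReal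

/-!
Write `v = u'`, `k = q (1 - 1/r)`. By Rolle's theorem `v` vanishes at some point, so integrating the
derivative of `|v| ^ (k + 1)` from there and applying Hölder's inequality gives
`‖v‖_∞ ^ (k + 1) ≤ (k + 1) ∫ |v| ^ k |v'| ≤ (k + 1) ‖v‖_q ^ k ‖v'‖_r`.
Insert this into `‖v‖_p ≤ ‖v‖_∞ ^ (1 - q/p) ‖v‖_q ^ (q/p)`: the equation defining `θ` says exactly
that `1 - q/p = (k + 1) θ`, and the constant is `(k + 1) ^ θ`.
-/

lemma toReal_div_toReal_le_one {p q : ℝ≥0∞} (hqp : q ≤ p) : q.toReal / p.toReal ≤ 1 := by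
  rcases eq_or_ne p ∞ with rfl | hp
  · simp
  · exact div_le_one_of_le₀ (ENNReal.toReal_mono hp hqp) ENNReal.toReal_nonneg

lemma one_sub_one_div_toReal_nonneg {r : ℝ≥0∞} (hr : 1 ≤ r) : 0 ≤ 1 - 1 / r.toReal :=
  sub_nonneg.2 (by simpa only [ENNReal.toReal_one] using toReal_div_toReal_le_one hr)

section Interpolation

variable {α ε : Type*} [MeasurableSpace α] {μ : Measure α}

lemma eLpNorm_le_eLpNorm_top_rpow_mul_eLpNorm_rpow [TopologicalSpace ε] [ContinuousENorm ε]
    {f : α → ε} (hf : AEStronglyMeasurable f μ) {p q : ℝ≥0∞} (hq : q ≠ 0) (hqp : q ≤ p) :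
    eLpNorm f p μ ≤ eLpNorm f ∞ μ ^ (1 - q.toReal / p.toReal) *
      eLpNorm f q μ ^ (q.toReal / p.toReal) := by
  rcases eq_or_ne p ∞ with rfl | hp
  · simp
  have hp0 : p ≠ 0 := (hq.bot_lt.trans_le hqp).ne'
  have hq_top : q ≠ ∞ := ne_top_of_le_ne_top hp hqp
  have hq_pos : 0 < q.toReal := ENNReal.toReal_pos hq hq_top
  have hp_pos : 0 < p.toReal := ENNReal.toReal_pos hp0 hp
  have hqp' : q.toReal ≤ p.toReal := ENNReal.toReal_mono hp hqp
  have lintegral_le : ∫⁻ x, ‖f x‖ₑ ^ p.toReal ∂μ ≤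
      eLpNorm f ∞ μ ^ (p.toReal - q.toReal) * ∫⁻ x, ‖f x‖ₑ ^ q.toReal ∂μ := by
    rw [← lintegral_const_mul'' _ (hf.enorm.pow_const _)]
    refine lintegral_mono_ae ?_
    filter_upwards [enorm_ae_le_eLpNormEssSup f μ] with x hx
    calc ‖f x‖ₑ ^ p.toReal = ‖f x‖ₑ ^ (p.toReal - q.toReal) * ‖f x‖ₑ ^ q.toReal := by
          rw [← ENNReal.rpow_add_of_nonneg _ _ (sub_nonneg.2 hqp') hq_pos.le, sub_add_cancel]
      _ ≤ eLpNorm f ∞ μ ^ (p.toReal - q.toReal) * ‖f x‖ₑ ^ q.toReal := by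
          rw [eLpNorm_exponent_top]
          gcongr
  calc eLpNorm f p μ = (∫⁻ x, ‖f x‖ₑ ^ p.toReal ∂μ) ^ (1 / p.toReal) :=
        eLpNorm_eq_lintegral_rpow_enorm_toReal hp0 hp
    _ ≤ (eLpNorm f ∞ μ ^ (p.toReal - q.toReal) *
          ∫⁻ x, ‖f x‖ₑ ^ q.toReal ∂μ) ^ (1 / p.toReal) := by gcongr
    _ = eLpNorm f ∞ μ ^ (1 - q.toReal / p.toReal) * eLpNorm f q μ ^ (q.toReal / p.toReal) := by
        rw [eLpNorm_eq_lintegral_rpow_enorm_toReal hq hq_top,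
          ENNReal.mul_rpow_of_nonneg _ _ (by positivity), ← ENNReal.rpow_mul, ← ENNReal.rpow_mul]
        congr 2 <;> field_simp

lemma lintegral_enorm_rpow_mul_enorm_le {ε' : Type*} [TopologicalSpace ε] [ContinuousENorm ε]
    [TopologicalSpace ε'] [ContinuousENorm ε'] {f : α → ε} {g : α → ε'}
    (hf : AEStronglyMeasurable f μ) (hg : AEStronglyMeasurable g μ)
    {q r : ℝ≥0∞} (hq : q ≠ 0) (hq' : q ≠ ∞) (hr : 1 ≤ r) :
    ∫⁻ x, ‖f x‖ₑ ^ (q.toReal * (1 - 1 / r.toReal)) * ‖g x‖ₑ ∂μ ≤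
      eLpNorm f q μ ^ (q.toReal * (1 - 1 / r.toReal)) * eLpNorm g r μ := by
  have hq_pos : 0 < q.toReal := ENNReal.toReal_pos hq hq'
  have norm_f : eLpNorm f q μ ^ (q.toReal * (1 - 1 / r.toReal)) =
      (∫⁻ x, ‖f x‖ₑ ^ q.toReal ∂μ) ^ (1 - 1 / r.toReal) := by
    rw [eLpNorm_eq_lintegral_rpow_enorm_toReal hq hq', ← ENNReal.rpow_mul, ← mul_assoc,
      one_div_mul_cancel hq_pos.ne', one_mul]
  rw [norm_f]
  rcases eq_or_ne r ∞ with rfl | hr_top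
  · simp only [ENNReal.toReal_top, div_zero, sub_zero, mul_one, ENNReal.rpow_one,
      eLpNorm_exponent_top]
    rw [← lintegral_mul_const'' _ (hf.enorm.pow_const _)]
    refine lintegral_mono_ae ?_
    filter_upwards [enorm_ae_le_eLpNormEssSup g μ] with x hx
    gcongr
  · have hr0 : r ≠ 0 := (zero_lt_one.trans_le hr).ne'
    have hr_pos : 0 < r.toReal := ENNReal.toReal_pos hr0 hr_top
    calc ∫⁻ x, ‖f x‖ₑ ^ (q.toReal * (1 - 1 / r.toReal)) * ‖g x‖ₑ ∂μ
        = ∫⁻ x, (‖f x‖ₑ ^ q.toReal) ^ (1 - 1 / r.toReal) *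
            (‖g x‖ₑ ^ r.toReal) ^ (1 / r.toReal) ∂μ := by
          simp only [← ENNReal.rpow_mul, mul_one_div_cancel hr_pos.ne', ENNReal.rpow_one]
      _ ≤ (∫⁻ x, ‖f x‖ₑ ^ q.toReal ∂μ) ^ (1 - 1 / r.toReal) *
            (∫⁻ x, ‖g x‖ₑ ^ r.toReal ∂μ) ^ (1 / r.toReal) :=
          ENNReal.lintegral_mul_norm_pow_le (hf.enorm.pow_const _) (hg.enorm.pow_const _)
            (one_sub_one_div_toReal_nonneg hr) (by positivity) (sub_add_cancel _ _)
      _ = (∫⁻ x, ‖f x‖ₑ ^ q.toReal ∂μ) ^ (1 - 1 / r.toReal) * eLpNorm g r μ := by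
          rw [eLpNorm_eq_lintegral_rpow_enorm_toReal hr0 hr_top]

end Interpolation

section OrdConnected

variable {E : Type*} [NormedAddCommGroup E] [NormedSpace ℝ E] {s : Set ℝ}

lemma enorm_sub_le_setLIntegral_of_hasDerivWithinAt [CompleteSpace E] {f f' : ℝ → E}
    (hs : s.OrdConnected) (hf : ∀ y ∈ s, HasDerivWithinAt f (f' y) s y) (hf' : ContinuousOn f' s)
    {x c : ℝ} (hx : x ∈ s) (hc : c ∈ s) :
    ‖f x - f c‖ₑ ≤ ∫⁻ y in s, ‖f' y‖ₑ := by
  have hcx : uIcc c x ⊆ s := hs.uIcc_subset hc hx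
  have ftc : ∫ y in c..x, f' y = f x - f c :=
    intervalIntegral.integral_eq_sub_of_hasDeriv_right
      (fun y hy => ((hf y (hcx hy)).continuousWithinAt).mono hcx)
      (fun y hy => ((hf y (hcx (Ioo_subset_Icc_self hy))).mono hcx |>.hasDerivAt
        (Icc_mem_nhds hy.1 hy.2)).hasDerivWithinAt)
      (hf'.mono hcx).intervalIntegrable
  calc ‖f x - f c‖ₑ = ‖∫ y in uIoc c x, f' y‖ₑ := by
        rw [← ftc, ← ofReal_norm, ← ofReal_norm, intervalIntegral.norm_intervalIntegral_eq]
    _ ≤ ∫⁻ y in uIoc c x, ‖f' y‖ₑ := enorm_integral_le_lintegral_enorm _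
    _ ≤ ∫⁻ y in s, ‖f' y‖ₑ := lintegral_mono_set (uIoc_subset_uIcc.trans hcx)

lemma enorm_deriv_abs_rpow {k : ℝ} (hk : 0 < k) (x : ℝ) :
    ‖deriv (fun y : ℝ => |y| ^ (k + 1)) x‖ₑ = ENNReal.ofReal (k + 1) * ‖x‖ₑ ^ k := by
  have norm_eq : ‖deriv (fun y : ℝ => |y| ^ (k + 1)) x‖ = (k + 1) * ‖x‖ ^ k := by
    simpa [norm_deriv_eq_norm_fderiv] using
      norm_fderiv_norm_id_rpow x (lt_add_of_pos_left 1 hk)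
  rw [← ofReal_norm, norm_eq, ENNReal.ofReal_mul (by positivity),
    ← ENNReal.ofReal_rpow_of_nonneg (norm_nonneg x) hk.le, ofReal_norm]

lemma enorm_rpow_le_setLIntegral_real {v v' : ℝ → ℝ} (hs : s.OrdConnected)
    (hv : ∀ y ∈ s, HasDerivWithinAt v (v' y) s y) (hv' : ContinuousOn v' s) {x c : ℝ} (hx : x ∈ s)
    (hc : c ∈ s) (hvc : v c = 0) {k : ℝ} (hk : 0 ≤ k) :
    ‖v x‖ₑ ^ (k + 1) ≤ ENNReal.ofReal (k + 1) * ∫⁻ y in s, ‖v y‖ₑ ^ k * ‖v' y‖ₑ := by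
  rcases hk.eq_or_lt with rfl | hk
  · simpa [hvc] using enorm_sub_le_setLIntegral_of_hasDerivWithinAt hs hv hv' hx hc
  let φ : ℝ → ℝ := fun y => |y| ^ (k + 1)
  have hφ : ContDiff ℝ 1 φ := contDiff_norm_rpow (lt_add_of_pos_left 1 hk)
  have hφv : ∀ y ∈ s, HasDerivWithinAt (φ ∘ v) (deriv φ (v y) * v' y) s y := fun y hy =>
    ((hφ.differentiable one_ne_zero) (v y)).hasDerivAt.comp_hasDerivWithinAt y (hv y hy)
  have hφv' : ContinuousOn (fun y => deriv φ (v y) * v' y) s :=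
    ((hφ.continuous_deriv le_rfl).comp_continuousOn
      fun y hy => (hv y hy).continuousWithinAt).mul hv'
  calc ‖v x‖ₑ ^ (k + 1) = ‖(φ ∘ v) x - (φ ∘ v) c‖ₑ := by
        simp [φ, hvc, Real.zero_rpow (add_pos hk one_pos).ne',
          Real.enorm_rpow_of_nonneg (abs_nonneg _) (add_pos hk one_pos).le]
    _ ≤ ∫⁻ y in s, ‖deriv φ (v y) * v' y‖ₑ :=
        enorm_sub_le_setLIntegral_of_hasDerivWithinAt hs hφv hφv' hx hc
    _ = ENNReal.ofReal (k + 1) * ∫⁻ y in s, ‖v y‖ₑ ^ k * ‖v' y‖ₑ := by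
        simp only [φ, enorm_mul, enorm_deriv_abs_rpow hk, mul_assoc]
        exact lintegral_const_mul' _ _ ENNReal.ofReal_ne_top

lemma enorm_rpow_le_setLIntegral {v v' : ℝ → E} (hs : s.OrdConnected)
    (hv : ∀ y ∈ s, HasDerivWithinAt v (v' y) s y) (hv' : ContinuousOn v' s) {x c : ℝ} (hx : x ∈ s)
    (hc : c ∈ s) (hvc : v c = 0) {k : ℝ} (hk : 0 ≤ k) :
    ‖v x‖ₑ ^ (k + 1) ≤ ENNReal.ofReal (k + 1) * ∫⁻ y in s, ‖v y‖ₑ ^ k * ‖v' y‖ₑ := by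
  -- A norming functional at `v x` reduces the claim to real-valued functions.
  obtain ⟨g, hg, hgx⟩ := exists_dual_vector'' ℝ (v x)
  have hg_le (z : E) : ‖g z‖ₑ ≤ ‖z‖ₑ := by
    simpa only [enorm_le_iff_norm_le, one_mul] using g.le_of_opNorm_le hg z
  calc ‖v x‖ₑ ^ (k + 1) = ‖g (v x)‖ₑ ^ (k + 1) := by simp [hgx]
    _ ≤ ENNReal.ofReal (k + 1) * ∫⁻ y in s, ‖g (v y)‖ₑ ^ k * ‖g (v' y)‖ₑ :=
        enorm_rpow_le_setLIntegral_real hs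
          (fun y hy => g.hasFDerivAt.comp_hasDerivWithinAt y (hv y hy))
          (g.continuous.comp_continuousOn hv') hx hc (by simp [hvc]) hk
    _ ≤ ENNReal.ofReal (k + 1) * ∫⁻ y in s, ‖v y‖ₑ ^ k * ‖v' y‖ₑ := by
        gcongr <;> exact hg_le _

lemma eLpNorm_top_rpow_le_mul_eLpNorm_deriv {v v' : ℝ → E} (hs : s.OrdConnected)
    (hv : ∀ y ∈ s, HasDerivWithinAt v (v' y) s y) (hv' : ContinuousOn v' s) {c : ℝ}
    (hc : c ∈ s) (hvc : v c = 0) {q r : ℝ≥0∞} (hq : q ≠ 0) (hq' : q ≠ ∞) (hr : 1 ≤ r) {k : ℝ}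
    (hk : k = q.toReal * (1 - 1 / r.toReal)) :
    eLpNorm v ∞ (volume.restrict s) ^ (k + 1) ≤ ENNReal.ofReal (k + 1) *
      (eLpNorm v q (volume.restrict s) ^ k * eLpNorm v' r (volume.restrict s)) := by
  have hs_meas : MeasurableSet s := hs.measurableSet
  have hk0 : 0 ≤ k := hk ▸ mul_nonneg ENNReal.toReal_nonneg (one_sub_one_div_toReal_nonneg hr)
  have hv_cont : ContinuousOn v s := fun y hy => (hv y hy).continuousWithinAt
  rw [← ENNReal.le_rpow_inv_iff (by positivity), eLpNorm_exponent_top]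
  refine eLpNormEssSup_le_of_ae_enorm_bound (ae_restrict_of_forall_mem hs_meas fun x hx => ?_)
  rw [ENNReal.le_rpow_inv_iff (by positivity)]
  refine (enorm_rpow_le_setLIntegral hs hv hv' hx hc hvc hk0).trans ?_
  gcongr
  rw [hk]
  exact lintegral_enorm_rpow_mul_enorm_le (hv_cont.aestronglyMeasurable hs_meas)
    (hv'.aestronglyMeasurable hs_meas) hq hq' hr

theorem eLpNorm_le_eLpNorm_deriv_rpow_mul_eLpNorm_rpow {v v' : ℝ → E} (hs : s.OrdConnected)
    (hv : ∀ y ∈ s, HasDerivWithinAt v (v' y) s y) (hv' : ContinuousOn v' s) {c : ℝ}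
    (hc : c ∈ s) (hvc : v c = 0) {p q r : ℝ≥0∞} (hq : q ≠ 0) (hq' : q ≠ ∞) (hqp : q ≤ p)
    (hr : 1 ≤ r) {θ : ℝ}
    (hθ : θ * (1 / q.toReal + 1 - 1 / r.toReal) = 1 / q.toReal - 1 / p.toReal) :
    eLpNorm v p (volume.restrict s) ≤
      ENNReal.ofReal ((q.toReal * (1 - 1 / r.toReal) + 1) ^ θ) *
        eLpNorm v' r (volume.restrict s) ^ θ * eLpNorm v q (volume.restrict s) ^ (1 - θ) := by
  set k : ℝ := q.toReal * (1 - 1 / r.toReal) with hk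
  have hq_pos : 0 < q.toReal := ENNReal.toReal_pos hq hq'
  have hk0 : 0 ≤ k := mul_nonneg hq_pos.le (one_sub_one_div_toReal_nonneg hr)
  have hθk : 1 - q.toReal / p.toReal = (k + 1) * θ := by
    have : k + 1 = q.toReal * (1 / q.toReal + 1 - 1 / r.toReal) := by rw [hk]; field_simp; ring
    rw [this, mul_assoc, mul_comm _ θ, hθ, mul_sub, mul_one_div_cancel hq_pos.ne', mul_one_div]
  have hθ0 : 0 ≤ θ :=
    nonneg_of_mul_nonneg_right (hθk ▸ sub_nonneg.2 (toReal_div_toReal_le_one hqp)) (by positivity)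
  have hθq : k * θ + q.toReal / p.toReal = 1 - θ := by linear_combination -hθk
  have hv_meas : AEStronglyMeasurable v (volume.restrict s) :=
    ContinuousOn.aestronglyMeasurable (fun y hy => (hv y hy).continuousWithinAt) hs.measurableSet
  let N (f : ℝ → E) (t : ℝ≥0∞) : ℝ≥0∞ := eLpNorm f t (volume.restrict s)
  calc N v p ≤ N v ∞ ^ (1 - q.toReal / p.toReal) * N v q ^ (q.toReal / p.toReal) :=
        eLpNorm_le_eLpNorm_top_rpow_mul_eLpNorm_rpow hv_meas hq hqp
    _ = (N v ∞ ^ (k + 1)) ^ θ * N v q ^ (q.toReal / p.toReal) := by rw [hθk, ENNReal.rpow_mul]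
    _ ≤ (ENNReal.ofReal (k + 1) * (N v q ^ k * N v' r)) ^ θ * N v q ^ (q.toReal / p.toReal) := by
        gcongr
        exact eLpNorm_top_rpow_le_mul_eLpNorm_deriv hs hv hv' hc hvc hq hq' hr hk
    _ = ENNReal.ofReal ((k + 1) ^ θ) * N v' r ^ θ *
          (N v q ^ (k * θ) * N v q ^ (q.toReal / p.toReal)) := by
        rw [ENNReal.mul_rpow_of_nonneg _ _ hθ0, ENNReal.mul_rpow_of_nonneg _ _ hθ0,
          ENNReal.ofReal_rpow_of_pos (by positivity), ENNReal.rpow_mul _ k]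
        ring
    _ = ENNReal.ofReal ((k + 1) ^ θ) * N v' r ^ θ * N v q ^ (1 - θ) := by
        rw [← ENNReal.rpow_add_of_nonneg _ _ (by positivity) (by positivity), hθq]

end OrdConnected

theorem interpolation_deriv_general (p q r : ℝ≥0∞) (hq : q ≠ 0) (hq' : q ≠ ∞) (hqp : q ≤ p)
    (hr : 1 ≤ r) (θ : ℝ)
    (hθ : θ * (1 / q.toReal + 1 - 1 / r.toReal) = 1 / q.toReal - 1 / p.toReal) :
    ∃ C > (0 : ℝ), ∀ a b : ℝ, a < b → ∀ u : ℝ → ℝ, ContDiffOn ℝ 2 u (Icc a b) → u a = u b →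
      eLpNorm (derivWithin u (Icc a b)) p (volume.restrict (Ioo a b)) ≤
        ENNReal.ofReal C *
          (eLpNorm (derivWithin (derivWithin u (Icc a b)) (Icc a b)) r
            (volume.restrict (Ioo a b))) ^ θ *
          (eLpNorm (derivWithin u (Icc a b)) q (volume.restrict (Ioo a b))) ^ (1 - θ) := by
  have hk : 0 ≤ q.toReal * (1 - 1 / r.toReal) :=
    mul_nonneg ENNReal.toReal_nonneg (one_sub_one_div_toReal_nonneg hr)
  refine ⟨(q.toReal * (1 - 1 / r.toReal) + 1) ^ θ, by positivity, fun a b hab u hu hu_ab => ?_⟩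
  have hI : UniqueDiffOn ℝ (Icc a b) := uniqueDiffOn_Icc hab
  have hu' : ContDiffOn ℝ 1 (derivWithin u (Icc a b)) (Icc a b) :=
    hu.derivWithin hI one_add_one_eq_two.le
  obtain ⟨c, hc, huc⟩ := exists_deriv_eq_zero hab hu.continuousOn hu_ab
  rw [← derivWithin_of_mem_nhds (Icc_mem_nhds hc.1 hc.2)] at huc
  exact eLpNorm_le_eLpNorm_deriv_rpow_mul_eLpNorm_rpow ordConnected_Ioo
    (fun y hy => (hu'.differentiableOn one_ne_zero y
      (Ioo_subset_Icc_self hy)).hasDerivWithinAt.mono Ioo_subset_Icc_self)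
    ((hu'.continuousOn_derivWithin hI le_rfl).mono Ioo_subset_Icc_self) hc huc hq hq' hqp hr hθ

/-- **Proposition 3.8**: for a bounded interval `I = (a, b)`, `1 ≤ q < ∞`, `q ≤ p ≤ ∞`,
`1 ≤ r ≤ ∞`, there is a constant `C = C(|I|, p, q, r) > 0` such that for every `u` twice
continuously differentiable on `[a, b]` with `u a = u b = 0`,
`‖u'‖_{L^p(I)} ≤ C ‖u''‖_{L^r(I)}^θ ‖u'‖_{L^q(I)}^{1-θ}`, where
`θ (1/q + 1 - 1/r) = 1/q - 1/p`. -/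
theorem interpolation_deriv (p q r : ℝ≥0∞) (hq : 1 ≤ q) (hq' : q ≠ ∞) (hqp : q ≤ p)
    (hr : 1 ≤ r) (θ : ℝ) (hθ0 : 0 ≤ θ) (hθ1 : θ ≤ 1)
    (hθ : θ * (1 / q.toReal + 1 - 1 / r.toReal) = 1 / q.toReal - 1 / p.toReal)
    (a b : ℝ) (hab : a < b) :
    ∃ C > (0:ℝ), ∀ u : ℝ → ℝ, ContDiffOn ℝ 2 u (Icc a b) → u a = 0 → u b = 0 →
      eLpNorm (derivWithin u (Icc a b)) p (volume.restrict (Ioo a b)) ≤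
        ENNReal.ofReal C *
          (eLpNorm (derivWithin (derivWithin u (Icc a b)) (Icc a b)) r
            (volume.restrict (Ioo a b))) ^ θ *
          (eLpNorm (derivWithin u (Icc a b)) q (volume.restrict (Ioo a b))) ^ (1 - θ) := by
  obtain ⟨C, hC, h⟩ :=
    interpolation_deriv_general p q r (zero_lt_one.trans_le hq).ne' hq' hqp hr θ hθ
  exact ⟨C, hC, fun u hu hua hub => h a b hab u hu (hua.trans hub.symm)⟩
end

section
/- For every $2 \le p \le \infty$ there exists a constant $C = C(p) > 0$ such that for every function $g$ three times continuously differentiable on $[-1,1]$ with $g(-1)=g(1)=0$, one has $\|g'\|_{L^p(-1,1)} \le C\, E(g)^{\frac{1}{4}+\frac{1}{2p}}\, D(g)^{\frac{1}{4}-\frac{1}{2p}}$. -/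
open MeasureTheory Set
open scoped ENNReal

/-- Derivative on the interval `[-1, 1]`. -/
noncomputable def dI (f : ℝ → ℝ) : ℝ → ℝ := derivWithin f (Icc (-1) 1)

/-- The energy `E(g) = (1/2) ∫_{-1}^{1} g'(y)^2 dy`. -/
noncomputable def energy (g : ℝ → ℝ) : ℝ :=
  (1/2) * ∫ y in Ioo (-1:ℝ) 1, (dI g y) ^ 2

/-- The dissipation `D(g) = 8 ∫_{-1}^{1} g''(y)^2 dy + (1/2) ∫_{-1}^{1} (1-y^2) g'''(y)^2 dy`. -/
noncomputable def dissipation (g : ℝ → ℝ) : ℝ :=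
  8 * (∫ y in Ioo (-1:ℝ) 1, (dI (dI g) y) ^ 2)
    + (1/2) * ∫ y in Ioo (-1:ℝ) 1, (1 - y ^ 2) * (dI (dI (dI g)) y) ^ 2

/-!
By Rolle, `u = g'` vanishes at some `c`, so `u(x)² = ∫_c^x 2 u u'` and Cauchy–Schwarz gives the
Agmon inequality `‖u‖_∞² ≤ 2 ‖u‖₂ ‖u'‖₂`. Here `‖u‖₂² = 2 E(g)` and `8 ‖u'‖₂² ≤ D(g)`, whence
`‖u‖_∞² ≤ E(g)^{1/2} D(g)^{1/2}`; interpolating `L^p` between `L²` and `L^∞` concludes. The weighted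
third-order term of `D(g)` enters only through its sign.
-/

section Lp

variable {α ε F : Type*} [MeasurableSpace α] {μ : Measure α}

lemma eLpNorm_le_eLpNorm_rpow_mul_eLpNorm_top_rpow [TopologicalSpace ε] [ContinuousENorm ε]
    {f : α → ε} (hf : AEStronglyMeasurable f μ) {p q : ℝ≥0∞} (hq : q ≠ 0) (hqp : q ≤ p) :
    eLpNorm f p μ ≤
      eLpNorm f q μ ^ (q.toReal / p.toReal) * eLpNorm f ∞ μ ^ (1 - q.toReal / p.toReal) := by
  rcases eq_or_ne p ∞ with rfl | hp
  · simp
  have hq_top : q ≠ ∞ := ne_top_of_le_ne_top hp hqp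
  have hq_pos : 0 < q.toReal := ENNReal.toReal_pos hq hq_top
  have hqp_real : q.toReal ≤ p.toReal := ENNReal.toReal_mono hp hqp
  have hp_pos : 0 < p.toReal := hq_pos.trans_le hqp_real
  have h_lintegral : ∫⁻ x, ‖f x‖ₑ ^ p.toReal ∂μ ≤
      (∫⁻ x, ‖f x‖ₑ ^ q.toReal ∂μ) * eLpNorm f ∞ μ ^ (p.toReal - q.toReal) := by
    rw [← lintegral_mul_const'' _ (hf.enorm.pow_const _)]
    refine lintegral_mono_ae ?_
    filter_upwards [enorm_ae_le_eLpNormEssSup f μ] with x hx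
    calc ‖f x‖ₑ ^ p.toReal
        = ‖f x‖ₑ ^ q.toReal * ‖f x‖ₑ ^ (p.toReal - q.toReal) := by
          rw [← ENNReal.rpow_add_of_nonneg _ _ hq_pos.le (sub_nonneg.2 hqp_real),
            add_sub_cancel]
      _ ≤ ‖f x‖ₑ ^ q.toReal * eLpNorm f ∞ μ ^ (p.toReal - q.toReal) := by
          gcongr
          simpa using hx
  rw [eLpNorm_eq_lintegral_rpow_enorm_toReal (ne_bot_of_le_ne_bot hq hqp) hp,
    eLpNorm_eq_lintegral_rpow_enorm_toReal hq hq_top]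
  refine (ENNReal.rpow_le_rpow h_lintegral (by positivity)).trans_eq ?_
  rw [ENNReal.mul_rpow_of_nonneg _ _ (by positivity), ← ENNReal.rpow_mul, ← ENNReal.rpow_mul]
  congr 2 <;> field_simp

variable [NormedAddCommGroup F]

lemma eLpNorm_two_eq_ofReal_sqrt_integral {f : α → F} (hf : MemLp f 2 μ) :
    eLpNorm f 2 μ = ENNReal.ofReal √(∫ x, ‖f x‖ ^ 2 ∂μ) := by
  simp [hf.eLpNorm_eq_integral_rpow_norm, Real.sqrt_eq_rpow]

lemma integral_norm_mul_norm_le_sqrt_mul_sqrt {f g : α → F} (hf : MemLp f 2 μ)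
    (hg : MemLp g 2 μ) :
    ∫ x, ‖f x‖ * ‖g x‖ ∂μ ≤ √(∫ x, ‖f x‖ ^ 2 ∂μ) * √(∫ x, ‖g x‖ ^ 2 ∂μ) := by
  simpa [Real.sqrt_eq_rpow] using
    integral_mul_norm_le_Lp_mul_Lq .two_two (by simpa using hf) (by simpa using hg)

lemma memLp_restrict_of_continuousOn_isCompact [TopologicalSpace α] [OpensMeasurableSpace α]
    [TopologicalSpace.PseudoMetrizableSpace α] [IsFiniteMeasureOnCompacts μ]
    {f : α → F} {K : Set α} (hK : IsCompact K) (hK_meas : MeasurableSet K)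
    (hf : ContinuousOn f K) (p : ℝ≥0∞) : MemLp f p (μ.restrict K) := by
  have : IsFiniteMeasure (μ.restrict K) := ⟨by simpa using hK.measure_lt_top⟩
  obtain ⟨M, hM⟩ := hK.exists_bound_of_continuousOn hf
  exact .of_bound (hf.aestronglyMeasurable_of_isCompact hK hK_meas) M
    (ae_restrict_of_forall_mem hK_meas hM)

end Lp

section Agmon

variable {F : Type*} [NormedAddCommGroup F] [InnerProductSpace ℝ F] {u u' : ℝ → F} {a b c x : ℝ}

lemma norm_sq_le_two_mul_integral_norm_mul_norm_deriv (hu : ContinuousOn u (Icc a b))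
    (hderiv : ∀ y ∈ Ioo a b, HasDerivAt u (u' y) y) (hu' : IntegrableOn u' (Icc a b))
    (hc : c ∈ Icc a b) (huc : u c = 0) (hx : x ∈ Icc a b) :
    ‖u x‖ ^ 2 ≤ 2 * ∫ y in Ioo a b, ‖u y‖ * ‖u' y‖ := by
  have hsub : uIcc c x ⊆ Icc a b := ordConnected_Icc.uIcc_subset hc hx
  have hbound_int : IntegrableOn (fun y => 2 * (‖u y‖ * ‖u' y‖)) (Icc a b) :=
    (IntegrableOn.continuousOn_mul hu.norm hu'.norm isCompact_Icc).const_mul 2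
  have hbound (y : ℝ) : ‖2 * inner ℝ (u y) (u' y)‖ ≤ 2 * (‖u y‖ * ‖u' y‖) := by
    simpa using norm_inner_le_norm (𝕜 := ℝ) (u y) (u' y)
  have hinner_int : IntegrableOn (fun y => 2 * inner ℝ (u y) (u' y)) (Icc a b) :=
    hbound_int.mono' (((hu.aestronglyMeasurable_of_isCompact isCompact_Icc measurableSet_Icc).inner
      hu'.1).const_mul 2) (.of_forall hbound)
  have hftc : ∫ y in c..x, 2 * inner ℝ (u y) (u' y) = ‖u x‖ ^ 2 := by
    rw [intervalIntegral.integral_eq_sub_of_hasDeriv_right (hu.norm.pow 2 |>.mono hsub)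
      (fun y hy => (hderiv y ?_).norm_sq.hasDerivWithinAt)
      (hinner_int.mono_set hsub).intervalIntegrable]
    · simp [huc]
    · exact Ioo_subset_Ioo (le_min hc.1 hx.1) (max_le hc.2 hx.2) hy
  calc ‖u x‖ ^ 2 = ∫ y in c..x, 2 * inner ℝ (u y) (u' y) := hftc.symm
    _ ≤ ∫ y in uIoc c x, ‖2 * inner ℝ (u y) (u' y)‖ :=
      (Real.le_norm_self _).trans intervalIntegral.norm_integral_le_integral_norm_uIoc
    _ ≤ ∫ y in uIoc c x, 2 * (‖u y‖ * ‖u' y‖) :=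
      setIntegral_mono (hinner_int.mono_set (uIoc_subset_uIcc.trans hsub)).norm
        (hbound_int.mono_set (uIoc_subset_uIcc.trans hsub)) hbound
    _ ≤ ∫ y in Icc a b, 2 * (‖u y‖ * ‖u' y‖) :=
      setIntegral_mono_set hbound_int (.of_forall fun y => by positivity)
        (uIoc_subset_uIcc.trans hsub).eventuallyLE
    _ = 2 * ∫ y in Ioo a b, ‖u y‖ * ‖u' y‖ := by
      rw [integral_const_mul, integral_Icc_eq_integral_Ioo]

lemma norm_sq_le_two_mul_sqrt_integral_mul_sqrt_integral_deriv (hu : ContinuousOn u (Icc a b))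
    (hderiv : ∀ y ∈ Ioo a b, HasDerivAt u (u' y) y)
    (hu' : MemLp u' 2 (volume.restrict (Icc a b)))
    (hc : c ∈ Icc a b) (huc : u c = 0) (hx : x ∈ Icc a b) :
    ‖u x‖ ^ 2 ≤ 2 * (√(∫ y in Ioo a b, ‖u y‖ ^ 2) * √(∫ y in Ioo a b, ‖u' y‖ ^ 2)) := by
  have hu_memLp : MemLp u 2 (volume.restrict (Icc a b)) :=
    memLp_restrict_of_continuousOn_isCompact isCompact_Icc measurableSet_Icc hu 2
  have hrestrict : volume.restrict (Ioo a b) ≤ volume.restrict (Icc a b) :=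
    Measure.restrict_mono_set _ Ioo_subset_Icc_self
  refine (norm_sq_le_two_mul_integral_norm_mul_norm_deriv hu hderiv
    (hu'.integrable one_le_two) hc huc hx).trans ?_
  gcongr
  exact integral_norm_mul_norm_le_sqrt_mul_sqrt (hu_memLp.mono_measure hrestrict)
    (hu'.mono_measure hrestrict)

end Agmon

section EnergyDissipation

variable {f g : ℝ → ℝ} {x : ℝ}

lemma contDiffOn_dI {m n : WithTop ℕ∞} (hf : ContDiffOn ℝ n f (Icc (-1) 1)) (hmn : m + 1 ≤ n) :
    ContDiffOn ℝ m (dI f) (Icc (-1) 1) :=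
  hf.derivWithin (uniqueDiffOn_Icc (by norm_num)) hmn

lemma hasDerivAt_dI (hf : DifferentiableOn ℝ f (Icc (-1) 1)) (hx : x ∈ Ioo (-1) 1) :
    HasDerivAt f (dI f x) x :=
  (hf x (Ioo_subset_Icc_self hx)).hasDerivWithinAt.hasDerivAt (Icc_mem_nhds hx.1 hx.2)

lemma exists_dI_eq_zero (hf : ContinuousOn f (Icc (-1) 1)) (hf_eq : f (-1) = f 1) :
    ∃ c ∈ Ioo (-1 : ℝ) 1, dI f c = 0 := by
  obtain ⟨c, hc, hc_deriv⟩ := exists_deriv_eq_zero (by norm_num) hf hf_eq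
  exact ⟨c, hc, (derivWithin_of_mem_nhds (Icc_mem_nhds hc.1 hc.2)).trans hc_deriv⟩

lemma energy_nonneg (g : ℝ → ℝ) : 0 ≤ energy g := by
  unfold energy
  positivity

lemma integral_sq_dI_eq_two_mul_energy (g : ℝ → ℝ) :
    ∫ y in Ioo (-1 : ℝ) 1, dI g y ^ 2 = 2 * energy g := by
  unfold energy
  ring

lemma sixteen_mul_energy_dI_le_dissipation (g : ℝ → ℝ) :
    16 * energy (dI g) ≤ dissipation g := by
  have hweighted : 0 ≤ ∫ y in Ioo (-1 : ℝ) 1, (1 - y ^ 2) * dI (dI (dI g)) y ^ 2 :=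
    setIntegral_nonneg measurableSet_Ioo fun y hy =>
      mul_nonneg (by nlinarith [hy.1, hy.2]) (sq_nonneg _)
  unfold dissipation energy
  linarith

lemma dissipation_nonneg (g : ℝ → ℝ) : 0 ≤ dissipation g :=
  (mul_nonneg (by norm_num) (energy_nonneg (dI g))).trans (sixteen_mul_energy_dI_le_dissipation g)

lemma sq_dI_le_sqrt_energy_mul_sqrt_dissipation (hg : ContDiffOn ℝ 2 g (Icc (-1) 1))
    (hg_eq : g (-1) = g 1) (hx : x ∈ Icc (-1) 1) :
    dI g x ^ 2 ≤ √(energy g) * √(dissipation g) := by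
  have hdI : ContDiffOn ℝ 1 (dI g) (Icc (-1) 1) := contDiffOn_dI hg (by norm_num)
  have hdI_dI : ContDiffOn ℝ 0 (dI (dI g)) (Icc (-1) 1) := contDiffOn_dI hdI (by norm_num)
  obtain ⟨c, hc, hc_zero⟩ := exists_dI_eq_zero hg.continuousOn hg_eq
  have hagmon := norm_sq_le_two_mul_sqrt_integral_mul_sqrt_integral_deriv hdI.continuousOn
    (fun y hy => hasDerivAt_dI (hdI.differentiableOn one_ne_zero) hy)
    (memLp_restrict_of_continuousOn_isCompact isCompact_Icc measurableSet_Icc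
      hdI_dI.continuousOn 2) (Ioo_subset_Icc_self hc) hc_zero hx
  simp only [Real.norm_eq_abs, sq_abs, integral_sq_dI_eq_two_mul_energy] at hagmon
  have hE := energy_nonneg g
  calc dI g x ^ 2 ≤ 2 * (√(2 * energy g) * √(2 * energy (dI g))) := hagmon
    _ = √(energy g) * √(16 * energy (dI g)) := by
      rw [← Real.sqrt_mul (by positivity), ← Real.sqrt_mul hE,
        show energy g * (16 * energy (dI g)) = 2 ^ 2 * (2 * energy g * (2 * energy (dI g))) by ring,
        Real.sqrt_mul (sq_nonneg 2), Real.sqrt_sq zero_le_two]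
    _ ≤ √(energy g) * √(dissipation g) := by
      gcongr
      exact sixteen_mul_energy_dI_le_dissipation g

lemma eLpNorm_top_dI_le (hg : ContDiffOn ℝ 2 g (Icc (-1) 1)) (hg_eq : g (-1) = g 1) :
    eLpNorm (dI g) ∞ (volume.restrict (Ioo (-1) 1)) ≤
      ENNReal.ofReal √(√(energy g) * √(dissipation g)) := by
  rw [eLpNorm_exponent_top]
  refine eLpNormEssSup_le_of_ae_bound (ae_restrict_of_forall_mem measurableSet_Ioo fun x hx => ?_)
  exact Real.abs_le_sqrt
    (sq_dI_le_sqrt_energy_mul_sqrt_dissipation hg hg_eq (Ioo_subset_Icc_self hx))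

-- `q = 0` stands for the exponent `∞`, as `ENNReal.toReal ∞ = 0` and `2 / 0 = 0`.
lemma sqrt_rpow_mul_sqrt_sqrt_mul_sqrt_rpow {E D q : ℝ} (hE : 0 ≤ E) (hD : 0 ≤ D)
    (hq_nonneg : 0 ≤ q) (hq : 2 / q ≤ 1) :
    √(2 * E) ^ (2 / q) * √(√E * √D) ^ (1 - 2 / q) =
      2 ^ (1 / q) * E ^ ((1 : ℝ) / 4 + 1 / (2 * q)) * D ^ ((1 : ℝ) / 4 - 1 / (2 * q)) := by
  have hE_exp : (1 : ℝ) / 4 + 1 / (2 * q) = 1 / q + (1 - 2 / q) / 4 := by ring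
  have hD_exp : (1 : ℝ) / 4 - 1 / (2 * q) = (1 - 2 / q) / 4 := by ring
  rw [hE_exp, hD_exp, Real.rpow_add_of_nonneg hE (by positivity) (by linarith)]
  simp only [Real.sqrt_eq_rpow]
  rw [← Real.mul_rpow hE hD, ← Real.rpow_mul (by positivity), ← Real.rpow_mul (by positivity),
    ← Real.rpow_mul (by positivity), Real.mul_rpow zero_le_two hE, Real.mul_rpow hE hD]
  ring_nf

end EnergyDissipation

theorem deriv_Lp_le_energy_dissipation_general {p : ℝ≥0∞} (hp : 2 ≤ p) {g : ℝ → ℝ}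
    (hg : ContDiffOn ℝ 2 g (Icc (-1) 1)) (hg_eq : g (-1) = g 1) :
    eLpNorm (dI g) p (volume.restrict (Ioo (-1) 1)) ≤
      ENNReal.ofReal (2 ^ (1 / p.toReal) * energy g ^ ((1:ℝ)/4 + 1/(2 * p.toReal))
        * dissipation g ^ ((1:ℝ)/4 - 1/(2 * p.toReal))) := by
  have hdI : MemLp (dI g) 2 (volume.restrict (Ioo (-1) 1)) :=
    (memLp_restrict_of_continuousOn_isCompact isCompact_Icc measurableSet_Icc
      (contDiffOn_dI (m := 1) hg (by norm_num)).continuousOn 2).mono_measure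
      (Measure.restrict_mono_set _ Ioo_subset_Icc_self)
  have hexp : 2 / p.toReal ≤ 1 := by
    rcases eq_or_ne p ∞ with rfl | hp_top
    · simp
    · exact div_le_one_of_le₀ (by simpa using ENNReal.toReal_mono hp_top hp) ENNReal.toReal_nonneg
  have hL2 : eLpNorm (dI g) 2 (volume.restrict (Ioo (-1) 1)) =
      ENNReal.ofReal √(2 * energy g) := by
    simp [eLpNorm_two_eq_ofReal_sqrt_integral hdI, integral_sq_dI_eq_two_mul_energy]
  calc eLpNorm (dI g) p (volume.restrict (Ioo (-1) 1))
      ≤ eLpNorm (dI g) 2 (volume.restrict (Ioo (-1) 1)) ^ (2 / p.toReal)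
        * eLpNorm (dI g) ∞ (volume.restrict (Ioo (-1) 1)) ^ (1 - 2 / p.toReal) := by
        simpa using eLpNorm_le_eLpNorm_rpow_mul_eLpNorm_top_rpow hdI.1 two_ne_zero hp
    _ ≤ ENNReal.ofReal √(2 * energy g) ^ (2 / p.toReal)
        * ENNReal.ofReal √(√(energy g) * √(dissipation g)) ^ (1 - 2 / p.toReal) := by
      rw [hL2]
      gcongr
      exact eLpNorm_top_dI_le hg hg_eq
    _ = _ := by
      rw [ENNReal.ofReal_rpow_of_nonneg (by positivity) (by positivity),
        ENNReal.ofReal_rpow_of_nonneg (by positivity) (sub_nonneg.2 hexp),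
        ← ENNReal.ofReal_mul (by positivity),
        sqrt_rpow_mul_sqrt_sqrt_mul_sqrt_rpow (energy_nonneg g) (dissipation_nonneg g)
          ENNReal.toReal_nonneg hexp]

/-- **Lemma 3.10 (iii)**: for `2 ≤ p ≤ ∞`,
`‖g'‖_{L^p(-1,1)} ≲ E(g)^{1/4 + 1/(2p)} D(g)^{1/4 - 1/(2p)}` (with `1/∞ = 0`). -/
theorem deriv_Lp_le_energy_dissipation (p : ℝ≥0∞) (hp : 2 ≤ p) :
    ∃ C > (0:ℝ), ∀ g : ℝ → ℝ, ContDiffOn ℝ 3 g (Icc (-1) 1) →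
      g (-1) = 0 → g 1 = 0 →
      eLpNorm (dI g) p (volume.restrict (Ioo (-1) 1)) ≤
        ENNReal.ofReal (C * energy g ^ ((1:ℝ)/4 + 1/(2 * p.toReal))
          * dissipation g ^ ((1:ℝ)/4 - 1/(2 * p.toReal))) := by
  refine ⟨2 ^ (1 / p.toReal), by positivity, fun g hg hg_left hg_right => ?_⟩
  exact deriv_Lp_le_energy_dissipation_general hp (hg.of_le (by norm_num))
    (hg_left.trans hg_right.symm)
end

section
/- For every $\epsilon > 0$ there exists a constant $C = C(\epsilon) > 0$ such that for every function $g$ three times continuously differentiable on $[-1,1]$ with $g(-1)=g(1)=0$, one has $\sup_{y \in (-1,1)} (1-y^2)^{\epsilon}\, |g''(y)| \le C\, D(g)^{1/2}$. -/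
open MeasureTheory Set
open scoped ENNReal

/-!
Write `f = g''`. Since `∫_a^b (1 - t²)⁻¹ dt = artanh b - artanh a` on `(-1, 1)`, Cauchy–Schwarz
applied to `f b - f a = ∫_a^b f'` gives `(f b - f a)² ≤ (∫ (1 - t²) f'²) |artanh b - artanh a|`.
With `a` a point of `[-1/2, 1/2]` where `f²` is at most its mean over that interval, `f` grows at
most like the square root of a logarithm near `±1`, and any positive power of `1 - y²` absorbs
that growth.
-/

theorem sq_integral_le_integral_mul_sq_mul_integral_inv {α : Type*} [MeasurableSpace α]
    {μ : Measure α} {f w : α → ℝ} (hw : ∀ᵐ x ∂μ, 0 < w x) (hf : Integrable f μ)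
    (hwf : Integrable (fun x => w x * f x ^ 2) μ) (hwi : Integrable (fun x => (w x)⁻¹) μ) :
    (∫ x, f x ∂μ) ^ 2 ≤ (∫ x, w x * f x ^ 2 ∂μ) * ∫ x, (w x)⁻¹ ∂μ := by
  have pointwise (l : ℝ) : ∀ᵐ x ∂μ, 2 * l * f x ≤ l ^ 2 * (w x * f x ^ 2) + (w x)⁻¹ := by
    filter_upwards [hw] with x hx
    have : l ^ 2 * (w x * f x ^ 2) + (w x)⁻¹ - 2 * l * f x
        = (l * w x * f x - 1) ^ 2 / w x := by field_simp; ring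
    have : 0 ≤ (l * w x * f x - 1) ^ 2 / w x := by positivity
    linarith
  have quadratic_nonneg (l : ℝ) : 0 ≤ (∫ x, w x * f x ^ 2 ∂μ) * (l * l)
      + (-2 * ∫ x, f x ∂μ) * l + ∫ x, (w x)⁻¹ ∂μ := by
    have := integral_mono_ae (hf.const_mul (2 * l)) ((hwf.const_mul (l ^ 2)).add hwi) (pointwise l)
    simp only [Pi.add_apply] at this
    rw [integral_add (hwf.const_mul _) hwi, integral_const_mul, integral_const_mul] at this
    linarith
  have := discrim_le_zero quadratic_nonneg
  rw [discrim] at this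
  linarith

theorem sq_sub_le_integral_mul_sq_deriv_mul_integral_inv {f f' w : ℝ → ℝ} {a b : ℝ} (hab : a ≤ b)
    (hf : ∀ t ∈ Icc a b, HasDerivAt f (f' t) t) (hf' : ContinuousOn f' (Icc a b))
    (hw : ContinuousOn w (Icc a b)) (hw_pos : ∀ t ∈ Icc a b, 0 < w t) :
    (f b - f a) ^ 2 ≤ (∫ t in a..b, w t * f' t ^ 2) * ∫ t in a..b, (w t)⁻¹ := by
  have integrable {u : ℝ → ℝ} (hu : ContinuousOn u (Icc a b)) :
      Integrable u (volume.restrict (Ioc a b)) :=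
    hu.integrableOn_Icc.mono_set Ioc_subset_Icc_self
  have ftc : ∫ t in a..b, f' t = f b - f a :=
    intervalIntegral.integral_eq_sub_of_hasDerivAt (by rwa [uIcc_of_le hab])
      (hf'.intervalIntegrable_of_Icc hab)
  simp only [← ftc, intervalIntegral.integral_of_le hab]
  refine sq_integral_le_integral_mul_sq_mul_integral_inv ?_ (integrable hf')
    (integrable (hw.mul (hf'.pow 2))) (integrable (hw.inv₀ fun t ht => (hw_pos t ht).ne'))
  exact ae_restrict_of_forall_mem measurableSet_Ioc fun t ht => hw_pos t (Ioc_subset_Icc_self ht)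

theorem exists_measureReal_mul_le_setIntegral {α : Type*} [MeasurableSpace α] {μ : Measure α}
    {s t : Set α} {f : α → ℝ} (hst : s ⊆ t) (hs : μ s ≠ 0) (hs' : μ s ≠ ∞)
    (hf : IntegrableOn f t μ) (hf_nonneg : 0 ≤ᵐ[μ.restrict t] f) :
    ∃ x ∈ s, μ.real s * f x ≤ ∫ y in t, f y ∂μ := by
  obtain ⟨x, hx, hfx⟩ := exists_le_setAverage hs hs' (hf.mono_set hst)
  refine ⟨x, hx, ?_⟩
  calc μ.real s * f x ≤ μ.real s * ⨍ y in s, f y ∂μ := by gcongr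
    _ = ∫ y in s, f y ∂μ := measure_smul_setAverage f hs'
    _ ≤ ∫ y in t, f y ∂μ := setIntegral_mono_set hf hf_nonneg hst.eventuallyLE

theorem one_sub_sq_pos {y : ℝ} (hy : y ∈ Ioo (-1 : ℝ) 1) : 0 < 1 - y ^ 2 :=
  sub_pos.2 (sq_lt_one_iff_abs_lt_one y |>.2 (abs_lt.2 hy))

theorem setIntegral_one_sub_sq_mul_sq_nonneg (u : ℝ → ℝ) :
    0 ≤ ∫ t in Ioo (-1 : ℝ) 1, (1 - t ^ 2) * u t ^ 2 :=
  setIntegral_nonneg measurableSet_Ioo fun _ ht => mul_nonneg (one_sub_sq_pos ht).le (sq_nonneg _)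

theorem hasDerivAt_artanh {y : ℝ} (hy : y ∈ Ioo (-1 : ℝ) 1) :
    HasDerivAt Real.artanh (1 - y ^ 2)⁻¹ y := by
  have hadd : 1 + y ≠ 0 := by linarith [hy.1]
  have hsub : 1 - y ≠ 0 := by linarith [hy.2]
  have hquot : HasDerivAt (fun t : ℝ => (1 + t) / (1 - t)) (2 / (1 - y) ^ 2) y :=
    (((hasDerivAt_id' y).const_add 1).fun_div ((hasDerivAt_id' y).const_sub 1) hsub).congr_deriv
      (by ring)
  have hlog := (hquot.log (div_ne_zero hadd hsub)).const_mul (1 / 2)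
  refine (hlog.congr_deriv ?_).congr_of_eventuallyEq ?_
  · rw [show 1 - y ^ 2 = (1 + y) * (1 - y) by ring]
    field_simp
  · filter_upwards [Ioo_mem_nhds hy.1 hy.2] with t ht
    exact Real.artanh_eq_half_log (Ioo_subset_Icc_self ht)

theorem integral_inv_one_sub_sq {a b : ℝ} (ha : a ∈ Ioo (-1 : ℝ) 1) (hb : b ∈ Ioo (-1 : ℝ) 1) :
    ∫ t in a..b, (1 - t ^ 2)⁻¹ = Real.artanh b - Real.artanh a := by
  have hsub : uIcc a b ⊆ Ioo (-1 : ℝ) 1 := ordConnected_Ioo.uIcc_subset ha hb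
  refine intervalIntegral.integral_eq_sub_of_hasDerivAt
    (fun t ht => hasDerivAt_artanh (hsub ht)) (ContinuousOn.intervalIntegrable ?_)
  exact ContinuousOn.inv₀ (by fun_prop) fun t ht => (one_sub_sq_pos (hsub ht)).ne'

theorem abs_artanh_le_half_log {y : ℝ} (hy : y ∈ Ioo (-1 : ℝ) 1) :
    |Real.artanh y| ≤ 1 / 2 * Real.log (4 / (1 - y ^ 2)) := by
  have log_quot_le {z : ℝ} (hz : z ∈ Ioo (-1 : ℝ) 1) :
      Real.log ((1 + z) / (1 - z)) ≤ Real.log (4 / (1 - z ^ 2)) := by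
    have hadd : 0 < 1 + z := by linarith [hz.1]
    have hsub : 0 < 1 - z := by linarith [hz.2]
    have hquot : (1 + z) / (1 - z) = (1 + z) ^ 2 / (1 - z ^ 2) := by
      rw [show 1 - z ^ 2 = (1 + z) * (1 - z) by ring]
      field_simp
    refine Real.log_le_log (by positivity) ?_
    rw [hquot]
    have := one_sub_sq_pos hz
    gcongr
    nlinarith [hz.1, hz.2]
  have hneg : -Real.log ((1 + y) / (1 - y)) ≤ Real.log (4 / (1 - y ^ 2)) := by
    rw [← Real.log_inv, inv_div]
    simpa only [neg_sq, sub_neg_eq_add, ← sub_eq_add_neg] using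
      log_quot_le (z := -y) ⟨by linarith [hy.2], by linarith [hy.1]⟩
  rw [Real.artanh_eq_half_log (Ioo_subset_Icc_self hy), abs_mul, abs_of_pos one_half_pos]
  gcongr
  exact abs_le'.2 ⟨log_quot_le hy, hneg⟩

theorem one_sub_sq_rpow_mul_abs_artanh_le {y ε : ℝ} (hε : 0 < ε) (hy : y ∈ Ioo (-1 : ℝ) 1) :
    (1 - y ^ 2) ^ ε * |Real.artanh y| ≤ 4 ^ ε / (2 * ε) := by
  have hw : 0 < 1 - y ^ 2 := one_sub_sq_pos hy
  have hlog : Real.log (4 / (1 - y ^ 2)) ≤ (4 / (1 - y ^ 2)) ^ ε / ε :=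
    Real.log_le_rpow_div (by positivity) hε
  calc (1 - y ^ 2) ^ ε * |Real.artanh y|
      ≤ (1 - y ^ 2) ^ ε * (1 / 2 * ((4 / (1 - y ^ 2)) ^ ε / ε)) := by
        gcongr
        exact (abs_artanh_le_half_log hy).trans (by gcongr)
    _ = 4 ^ ε / (2 * ε) := by
        rw [Real.div_rpow (by norm_num) hw.le]
        field_simp

theorem abs_artanh_le_three {x : ℝ} (hx : x ∈ Icc (-(1 / 2) : ℝ) (1 / 2)) :
    |Real.artanh x| ≤ 3 := by
  have hx_sq : x ^ 2 ≤ 1 / 4 := by nlinarith [hx.1, hx.2]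
  have := one_sub_sq_rpow_mul_abs_artanh_le one_pos
    (Icc_subset_Ioo (by norm_num) (by norm_num) hx)
  norm_num only [Real.rpow_one] at this
  nlinarith [abs_nonneg (Real.artanh x)]

section OneSubSqWeight

variable {f f' : ℝ → ℝ} (hf : ∀ t ∈ Ioo (-1 : ℝ) 1, HasDerivAt f (f' t) t)
  (hf' : ContinuousOn f' (Ioo (-1) 1))
  (hwf' : IntegrableOn (fun t => (1 - t ^ 2) * f' t ^ 2) (Ioo (-1) 1))

include hf hf' hwf'

theorem sq_sub_le_mul_abs_artanh_sub {a b : ℝ} (ha : a ∈ Ioo (-1 : ℝ) 1)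
    (hb : b ∈ Ioo (-1 : ℝ) 1) :
    (f b - f a) ^ 2 ≤
      (∫ t in Ioo (-1 : ℝ) 1, (1 - t ^ 2) * f' t ^ 2) * |Real.artanh b - Real.artanh a| := by
  wlog hab : a ≤ b generalizing a b
  · rw [sub_sq_comm, abs_sub_comm]
    exact this hb ha (le_of_not_ge hab)
  have hsub : Icc a b ⊆ Ioo (-1 : ℝ) 1 := ordConnected_Ioo.out ha hb
  have hmono : ∫ t in a..b, (1 - t ^ 2) * f' t ^ 2
      ≤ ∫ t in Ioo (-1 : ℝ) 1, (1 - t ^ 2) * f' t ^ 2 := by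
    rw [intervalIntegral.integral_of_le hab]
    refine setIntegral_mono_set hwf' ?_ (Ioc_subset_Icc_self.trans hsub).eventuallyLE
    exact ae_restrict_of_forall_mem measurableSet_Ioo fun t ht =>
      mul_nonneg (one_sub_sq_pos ht).le (sq_nonneg _)
  calc (f b - f a) ^ 2
      ≤ (∫ t in a..b, (1 - t ^ 2) * f' t ^ 2) * ∫ t in a..b, (1 - t ^ 2)⁻¹ :=
        sq_sub_le_integral_mul_sq_deriv_mul_integral_inv hab (fun t ht => hf t (hsub ht))
          (hf'.mono hsub) (by fun_prop) fun t ht => one_sub_sq_pos (hsub ht)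
    _ = (∫ t in a..b, (1 - t ^ 2) * f' t ^ 2) * |Real.artanh b - Real.artanh a| := by
        rw [integral_inv_one_sub_sq ha hb,
          abs_of_nonneg (sub_nonneg.2 (Real.artanh_le_artanh ha.1 hb.2 hab))]
    _ ≤ _ := by gcongr

theorem sq_le_two_mul_integral_sq_add (hf_sq : IntegrableOn (fun t => f t ^ 2) (Ioo (-1) 1))
    {y : ℝ} (hy : y ∈ Ioo (-1 : ℝ) 1) :
    f y ^ 2 ≤ 2 * (∫ t in Ioo (-1 : ℝ) 1, f t ^ 2) +
      2 * (∫ t in Ioo (-1 : ℝ) 1, (1 - t ^ 2) * f' t ^ 2) * (|Real.artanh y| + 3) := by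
  have hsub : Icc (-(1 / 2) : ℝ) (1 / 2) ⊆ Ioo (-1) 1 :=
    Icc_subset_Ioo (by norm_num) (by norm_num)
  have hvol : volume (Icc (-(1 / 2) : ℝ) (1 / 2)) = 1 := by norm_num [Real.volume_Icc]
  obtain ⟨x, hx, hfx⟩ := exists_measureReal_mul_le_setIntegral hsub (by simp)
    (by simp) hf_sq (ae_of_all _ fun t => sq_nonneg (f t))
  rw [measureReal_def, hvol, ENNReal.toReal_one, one_mul] at hfx
  have hartanh : |Real.artanh y - Real.artanh x| ≤ |Real.artanh y| + 3 :=
    (abs_sub _ _).trans (by gcongr; exact abs_artanh_le_three hx)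
  calc f y ^ 2 ≤ 2 * (f x ^ 2 + (f y - f x) ^ 2) := by
        simpa only [add_sub_cancel] using add_sq_le (a := f x) (b := f y - f x)
    _ ≤ 2 * ((∫ t in Ioo (-1 : ℝ) 1, f t ^ 2) +
          (∫ t in Ioo (-1 : ℝ) 1, (1 - t ^ 2) * f' t ^ 2) * (|Real.artanh y| + 3)) := by
        gcongr
        refine (sq_sub_le_mul_abs_artanh_sub hf hf' hwf' (hsub hx) hy).trans ?_
        have := setIntegral_one_sub_sq_mul_sq_nonneg f'
        gcongr
    _ = _ := by ring

theorem sq_one_sub_sq_rpow_mul_abs_le (hf_sq : IntegrableOn (fun t => f t ^ 2) (Ioo (-1) 1))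
    {ε : ℝ} (hε : 0 < ε) {y : ℝ} (hy : y ∈ Ioo (-1 : ℝ) 1) :
    ((1 - y ^ 2) ^ ε * |f y|) ^ 2 ≤ 2 * (∫ t in Ioo (-1 : ℝ) 1, f t ^ 2) +
      (4 ^ (2 * ε) / (2 * ε) + 6) * ∫ t in Ioo (-1 : ℝ) 1, (1 - t ^ 2) * f' t ^ 2 := by
  have hA : 0 ≤ ∫ t in Ioo (-1 : ℝ) 1, f t ^ 2 := integral_nonneg fun t => sq_nonneg _
  have hB := setIntegral_one_sub_sq_mul_sq_nonneg f'
  have hfy := sq_le_two_mul_integral_sq_add hf hf' hwf' hf_sq hy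
  have hartanh := one_sub_sq_rpow_mul_abs_artanh_le (by positivity : 0 < 2 * ε) hy
  set A := ∫ t in Ioo (-1 : ℝ) 1, f t ^ 2
  set B := ∫ t in Ioo (-1 : ℝ) 1, (1 - t ^ 2) * f' t ^ 2
  have hw : 0 < 1 - y ^ 2 := one_sub_sq_pos hy
  have hw_le_one : (1 - y ^ 2) ^ (2 * ε) ≤ 1 :=
    Real.rpow_le_one hw.le (by linarith [sq_nonneg y]) (by positivity)
  calc ((1 - y ^ 2) ^ ε * |f y|) ^ 2 = (1 - y ^ 2) ^ (2 * ε) * f y ^ 2 := by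
        rw [mul_pow, sq_abs, ← Real.rpow_mul_natCast hw.le, mul_comm ε, Nat.cast_ofNat]
    _ ≤ (1 - y ^ 2) ^ (2 * ε) * (2 * A + 2 * B * (|Real.artanh y| + 3)) := by gcongr
    _ = (1 - y ^ 2) ^ (2 * ε) * (2 * A + 6 * B)
          + 2 * B * ((1 - y ^ 2) ^ (2 * ε) * |Real.artanh y|) := by ring
    _ ≤ 1 * (2 * A + 6 * B) + 2 * B * (4 ^ (2 * ε) / (2 * (2 * ε))) := by gcongr
    _ = 2 * A + (4 ^ (2 * ε) / (2 * ε) + 6) * B := by field_simp; ring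

end OneSubSqWeight

theorem sq_one_sub_sq_rpow_mul_abs_dI_dI_le {g : ℝ → ℝ} (hg : ContDiffOn ℝ 3 g (Icc (-1) 1))
    {ε : ℝ} (hε : 0 < ε) {y : ℝ} (hy : y ∈ Ioo (-1 : ℝ) 1) :
    ((1 - y ^ 2) ^ ε * |dI (dI g) y|) ^ 2 ≤
      2 * (∫ t in Ioo (-1 : ℝ) 1, dI (dI g) t ^ 2) + (4 ^ (2 * ε) / (2 * ε) + 6) *
        ∫ t in Ioo (-1 : ℝ) 1, (1 - t ^ 2) * dI (dI (dI g)) t ^ 2 := by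
  have huniq : UniqueDiffOn ℝ (Icc (-1 : ℝ) 1) := uniqueDiffOn_Icc (by norm_num)
  have hg₁ : ContDiffOn ℝ 2 (dI g) (Icc (-1) 1) := hg.derivWithin huniq (by norm_num)
  have hg₂ : ContDiffOn ℝ 1 (dI (dI g)) (Icc (-1) 1) := hg₁.derivWithin huniq (by norm_num)
  have hg₃ : ContinuousOn (dI (dI (dI g))) (Icc (-1) 1) :=
    hg₂.continuousOn_derivWithin huniq le_rfl
  have hderiv : ∀ t ∈ Ioo (-1 : ℝ) 1, HasDerivAt (dI (dI g)) (dI (dI (dI g)) t) t := fun t ht =>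
    (hg₂.differentiableOn one_ne_zero t (Ioo_subset_Icc_self ht)).hasDerivWithinAt.hasDerivAt
      (Icc_mem_nhds ht.1 ht.2)
  have integrable {u : ℝ → ℝ} (hu : ContinuousOn u (Icc (-1) 1)) : IntegrableOn u (Ioo (-1) 1) :=
    hu.integrableOn_Icc.mono_set Ioo_subset_Icc_self
  exact sq_one_sub_sq_rpow_mul_abs_le hderiv (hg₃.mono Ioo_subset_Icc_self)
    (integrable (by fun_prop)) (integrable (hg₂.continuousOn.pow 2)) hε hy

theorem weighted_second_deriv_sup_general (ε : ℝ) (hε : 0 < ε) :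
    ∃ C > (0 : ℝ), ∀ g : ℝ → ℝ, ContDiffOn ℝ 3 g (Icc (-1) 1) →
      ∀ y ∈ Ioo (-1 : ℝ) 1, (1 - y ^ 2) ^ ε * |dI (dI g) y| ≤
        C * dissipation g ^ ((1 : ℝ) / 2) := by
  set K : ℝ := 4 ^ (2 * ε) / (2 * ε) + 6
  have hK : 0 < K := by positivity
  refine ⟨√(1 + 2 * K), by positivity, fun g hg y hy => ?_⟩
  have hA : 0 ≤ ∫ t in Ioo (-1 : ℝ) 1, dI (dI g) t ^ 2 := integral_nonneg fun t => sq_nonneg _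
  have hB := setIntegral_one_sub_sq_mul_sq_nonneg (dI (dI (dI g)))
  rw [← Real.sqrt_eq_rpow, ← Real.sqrt_mul (by positivity)]
  refine Real.le_sqrt_of_sq_le ((sq_one_sub_sq_rpow_mul_abs_dI_dI_le hg hε hy).trans ?_)
  rw [dissipation]
  nlinarith [mul_nonneg hK.le hA]

/-- **Lemma 3.10 (vi)**: for every `ε > 0`,
`‖(1-y²)^ε g''‖_{L^∞(-1,1)} ≲ D(g)^{1/2}`. -/
theorem weighted_second_deriv_sup (ε : ℝ) (hε : 0 < ε) :
    ∃ C > (0:ℝ), ∀ g : ℝ → ℝ, ContDiffOn ℝ 3 g (Icc (-1) 1) →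
      g (-1) = 0 → g 1 = 0 →
      ∀ y ∈ Ioo (-1:ℝ) 1, (1 - y ^ 2) ^ ε * |dI (dI g) y| ≤
        C * dissipation g ^ ((1:ℝ)/2) := by
  obtain ⟨C, hC, h⟩ := weighted_second_deriv_sup_general ε hε
  exact ⟨C, hC, fun g hg _ _ => h g hg⟩
end

section
/- Let $E, D : [0,\infty) \to [0,\infty)$ be differentiable functions and let $a, b > 0$, $\alpha > 1$, $\beta > 0$ be such that for all $t \ge 0$: $E'(t) + D(t) \le a\,(E(t)^{\alpha} + E(t)^{\beta} D(t))$ and $b\, E(t) \le D(t)$. Then there exist $\varepsilon > 0$ and $\nu > 0$ such that if $E(0) < \varepsilon$, then $E(t) \le E(0)\, e^{-\nu t}$ for all $t \ge 0$. -/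
open Set

/-!
While `E` is small, the nonlinear terms `a E ^ α` and `a E ^ β D` are absorbed by the dissipation
`D ≥ b E`, so that `E' < -ν E` for any prescribed rate `ν < b`. Smallness of `E` persists because
this is only needed at a first contact of `E` with a barrier `t ↦ η * exp (-ν * t)`, `η > E 0`,
which itself stays below the smallness threshold; then `η` tends to `E 0`.
-/

open Filter Topology

theorem le_mul_exp_neg_of_deriv_right_lt {f f' : ℝ → ℝ} {a b ν δ : ℝ}
    (hf : ContinuousOn f (Icc a b))
    (hf' : ∀ x ∈ Ico a b, HasDerivWithinAt f (f' x) (Ici x) x)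
    (hν : 0 ≤ ν) (ha : 0 ≤ f a) (haδ : f a < δ)
    (bound : ∀ x ∈ Ico a b, f x ∈ Ioo 0 δ → f' x < -ν * f x) :
    ∀ x ∈ Icc a b, f x ≤ f a * Real.exp (-ν * (x - a)) := by
  have le_barrier : ∀ η ∈ Ioo (f a) δ, ∀ x ∈ Icc a b, f x ≤ η * Real.exp (-ν * (x - a)) := by
    rintro η ⟨haη, hηδ⟩ x hx
    have hη : 0 < η := ha.trans_lt haη
    have hderiv (y : ℝ) : HasDerivAt (fun y ↦ η * Real.exp (-ν * (y - a)))
        (-ν * (η * Real.exp (-ν * (y - a)))) y := by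
      have hlin : HasDerivAt (fun y ↦ -ν * (y - a)) (-ν) y := by
        simpa using ((hasDerivAt_id y).sub_const a).const_mul (-ν)
      exact (hlin.exp.const_mul η).congr_deriv (by ring)
    refine image_le_of_deriv_right_lt_deriv_boundary hf hf' ?_ hderiv ?_ hx
    · simpa using haη.le
    · intro y hy hcontact
      have barrier_le : η * Real.exp (-ν * (y - a)) ≤ η :=
        mul_le_of_le_one_right hη.le <| Real.exp_le_one_iff.2 <|
          mul_nonpos_of_nonpos_of_nonneg (neg_nonpos.2 hν) (sub_nonneg.2 hy.1)
      rw [← hcontact]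
      exact bound y hy ⟨hcontact ▸ by positivity, hcontact ▸ barrier_le.trans_lt hηδ⟩
  intro x hx
  have htendsto : Tendsto (fun η ↦ η * Real.exp (-ν * (x - a))) (𝓝[>] f a)
      (𝓝 (f a * Real.exp (-ν * (x - a)))) :=
    (continuous_mul_const _).continuousWithinAt
  refine ge_of_tendsto htendsto ?_
  filter_upwards [Ioo_mem_nhdsGT haδ] with η hη using le_barrier η hη x hx

theorem tendsto_const_mul_rpow_nhdsGT_zero (a : ℝ) {p : ℝ} (hp : 0 < p) :
    Tendsto (fun x : ℝ ↦ a * x ^ p) (𝓝[>] 0) (𝓝 0) := by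
  have h := (Real.continuousAt_rpow_const 0 p (Or.inr hp.le)).tendsto.const_mul a
  rw [Real.zero_rpow hp.ne', mul_zero] at h
  exact h.mono_left nhdsWithin_le_nhds

theorem eventually_lt_neg_mul_of_add_le (a : ℝ) {b α β ν : ℝ} (hα : 1 < α) (hβ : 0 < β)
    (hν : ν < b) :
    ∀ᶠ x : ℝ in 𝓝[>] 0, ∀ d x' : ℝ,
      x' + d ≤ a * (x ^ α + x ^ β * d) → b * x ≤ d → x' < -ν * x := by
  have hβ_tendsto := tendsto_const_mul_rpow_nhdsGT_zero a hβ
  have hα_tendsto := tendsto_const_mul_rpow_nhdsGT_zero a (sub_pos.2 hα)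
  have hrate_tendsto : Tendsto (fun x : ℝ ↦ (1 - a * x ^ β) * b - a * x ^ (α - 1)) (𝓝[>] 0)
      (𝓝 b) := by
    simpa using ((hβ_tendsto.const_sub 1).mul_const b).sub hα_tendsto
  filter_upwards [hβ_tendsto.eventually_le_const one_pos, hrate_tendsto.eventually_const_lt hν,
    self_mem_nhdsWithin] with x habsorb hrate (hx : 0 < x) d x' hineq hd
  have hpow : x ^ α = x ^ (α - 1) * x := by
    rw [← Real.rpow_add_one hx.ne', sub_add_cancel]
  calc
    x' ≤ a * x ^ α - (1 - a * x ^ β) * d := by linarith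
    _ ≤ a * x ^ α - (1 - a * x ^ β) * (b * x) :=
      sub_le_sub_left (mul_le_mul_of_nonneg_left hd (sub_nonneg.2 habsorb)) _
    _ = -((1 - a * x ^ β) * b - a * x ^ (α - 1)) * x := by rw [hpow]; ring
    _ < -ν * x := by gcongr

theorem decay_of_energy_dissipation_general (a : ℝ) {b α β ν : ℝ} (hα : 1 < α)
    (hβ : 0 < β) (hν : 0 ≤ ν) (hνb : ν < b) :
    ∃ ε > (0 : ℝ), ∀ E D E' : ℝ → ℝ,
      (∀ t ≥ (0 : ℝ), 0 ≤ E t) →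
      (∀ t ≥ (0 : ℝ), HasDerivWithinAt E (E' t) (Ici 0) t) →
      (∀ t ≥ (0 : ℝ), E' t + D t ≤ a * (E t ^ α + E t ^ β * D t)) →
      (∀ t ≥ (0 : ℝ), b * E t ≤ D t) →
      E 0 < ε → ∀ t ≥ (0 : ℝ), E t ≤ E 0 * Real.exp (-ν * t) := by
  obtain ⟨ε, hε, hsmall⟩ := mem_nhdsGT_iff_exists_Ioo_subset.1
    (eventually_lt_neg_mul_of_add_le a hα hβ hνb)
  refine ⟨ε, hε, fun E D E' hEpos hE hineq hED hE0 t ht ↦ ?_⟩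
  have hcont : ContinuousOn E (Icc 0 t) := fun s hs ↦
    ((hE s hs.1).mono Icc_subset_Ici_self).continuousWithinAt
  have hderiv : ∀ s ∈ Ico 0 t, HasDerivWithinAt E (E' s) (Ici s) s := fun s hs ↦
    (hE s hs.1).mono (Ici_subset_Ici.2 hs.1)
  have hrate : ∀ s ∈ Ico 0 t, E s ∈ Ioo 0 ε → E' s < -ν * E s := fun s hs hEs ↦
    hsmall hEs (D s) (E' s) (hineq s hs.1) (hED s hs.1)
  simpa only [sub_zero] using
    le_mul_exp_neg_of_deriv_right_lt hcont hderiv hν (hEpos 0 le_rfl) hE0 hrate t ⟨ht, le_rfl⟩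

/-- **Lemma 3.12**: if `E' + D ≤ a (E^α + E^β D)` and `b E ≤ D` on `[0, ∞)` with
`a, b > 0`, `α > 1`, `β > 0`, then there are `ε > 0` and `ν > 0` such that `E(0) < ε`
implies `E(t) ≤ E(0) e^{-ν t}` for all `t ≥ 0`. -/
theorem decay_of_energy_dissipation (E D E' : ℝ → ℝ)
    (hEpos : ∀ t ≥ (0:ℝ), 0 ≤ E t) (hDpos : ∀ t ≥ (0:ℝ), 0 ≤ D t)
    (hE : ∀ t ≥ (0:ℝ), HasDerivWithinAt E (E' t) (Ici 0) t)
    (hD : DifferentiableOn ℝ D (Ici 0))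
    (a b α β : ℝ) (ha : 0 < a) (hb : 0 < b) (hα : 1 < α) (hβ : 0 < β)
    (hineq : ∀ t ≥ (0:ℝ), E' t + D t ≤ a * (E t ^ α + E t ^ β * D t))
    (hED : ∀ t ≥ (0:ℝ), b * E t ≤ D t) :
    ∃ ε > (0:ℝ), ∃ ν > (0:ℝ), E 0 < ε →
      ∀ t ≥ (0:ℝ), E t ≤ E 0 * Real.exp (-ν * t) := by
  obtain ⟨ε, hε, h⟩ :=
    decay_of_energy_dissipation_general a hα hβ (half_pos hb).le (half_lt_self hb)
  exact ⟨ε, hε, b / 2, half_pos hb, h E D E' hEpos hE hineq hED⟩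
end

section
/- Let $E, D : [0,\infty) \to [0,\infty)$ be differentiable functions and let $a, b > 0$, $\alpha_1, \alpha_2 > 1$, $\beta_1, \beta_2 > 0$ be such that for all $t \ge 0$: $E'(t) + D(t) \le a\,\left(E(t)^{\alpha_1} + E(t)^{\alpha_2} + \left(E(t)^{\beta_1} + E(t)^{\beta_2}\right) D(t)\right)$ and $b\, E(t) \le D(t)$. Then for every $c_0 > 0$ satisfying $1 - a(c_0^{\beta_1} + c_0^{\beta_2}) > 0$ and $\gamma := b\left(1 - a(c_0^{\beta_1} + c_0^{\beta_2})\right) - a(c_0^{\alpha_1 - 1} + c_0^{\alpha_2 - 1}) > 0$, one has: if $E(0) < c_0$, then $E(t) \le E(0)\, e^{-\gamma t}$ for all $t \ge 0$. -/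
open Set

/-! While `E < c₀`, monotonicity bounds the nonlinear terms by linear ones with coefficients
evaluated at `c₀`, and absorbing `D` into the left-hand side leaves `E' ≤ -γ E ≤ 0`. So `E` cannot
grow as long as it is below `c₀`; starting strictly below, it never reaches `c₀`, the linear
inequality holds for all times, and Grönwall's inequality integrates it. -/

section RightDerivative

variable {f f' : ℝ → ℝ} {a b c K : ℝ}

theorem le_mul_exp_of_deriv_right_le_mul (hf : ContinuousOn f (Icc a b))
    (hf' : ∀ x ∈ Ico a b, HasDerivWithinAt f (f' x) (Ici x) x)
    (bound : ∀ x ∈ Ico a b, f' x ≤ K * f x) :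
    ∀ x ∈ Icc a b, f x ≤ f a * Real.exp (K * (x - a)) := by
  intro x hx
  rw [← gronwallBound_ε0]
  exact le_gronwallBound_of_liminf_deriv_right_le hf
    (fun y hy _ hr => (hf' y hy).liminf_right_slope_le hr) le_rfl
    (fun y hy => (bound y hy).trans_eq (add_zero _).symm) x hx

theorem lt_of_deriv_right_nonpos_of_lt (hf : ContinuousOn f (Icc a b))
    (hf' : ∀ x ∈ Ico a b, HasDerivWithinAt f (f' x) (Ici x) x) (ha : f a < c)
    (bound : ∀ x ∈ Ico a b, f x < c → f' x ≤ 0) :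
    ∀ x ∈ Icc a b, f x < c := by
  intro x hx
  -- A barrier of positive slope that stays below `c`: `f` can only meet it where `f' ≤ 0`.
  obtain ⟨ε, hε, hεc⟩ := exists_pos_mul_lt (sub_pos.2 ha) (b - a)
  have barrier_lt : ∀ y ≤ b, f a + ε * (y - a) < c := fun y hy => by
    linarith [mul_le_mul_of_nonneg_left (sub_le_sub_right hy a) hε.le]
  have hasDerivAt_barrier : ∀ y, HasDerivAt (fun y => f a + ε * (y - a)) ε y := fun y => by
    simpa using (((hasDerivAt_id y).sub_const a).const_mul ε).const_add (f a)
  have le_barrier : f x ≤ f a + ε * (x - a) :=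
    image_le_of_deriv_right_lt_deriv_boundary hf hf' (by simp) hasDerivAt_barrier
      (fun y hy hfy => (bound y hy (hfy.trans_lt (barrier_lt y hy.2.le))).trans_lt hε) hx
  exact le_barrier.trans_lt (barrier_lt x hx.2)

theorem le_mul_exp_of_deriv_right_le_mul_of_lt (hf : ContinuousOn f (Icc a b))
    (hf' : ∀ x ∈ Ico a b, HasDerivWithinAt f (f' x) (Ici x) x)
    (hf₀ : ∀ x ∈ Ico a b, 0 ≤ f x) (hK : K ≤ 0) (ha : f a < c)
    (bound : ∀ x ∈ Ico a b, f x < c → f' x ≤ K * f x) :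
    ∀ x ∈ Icc a b, f x ≤ f a * Real.exp (K * (x - a)) := by
  have hlt : ∀ x ∈ Icc a b, f x < c :=
    lt_of_deriv_right_nonpos_of_lt hf hf' ha fun x hx hfx =>
      (bound x hx hfx).trans (mul_nonpos_of_nonpos_of_nonneg hK (hf₀ x hx))
  exact le_mul_exp_of_deriv_right_le_mul hf hf' fun x hx =>
    bound x hx (hlt x (Ico_subset_Icc_self hx))

end RightDerivative

theorem le_neg_mul_of_add_le_mul_add_mul {e e' d b p q : ℝ} (hq : q ≤ 1) (hed : b * e ≤ d)
    (h : e' + d ≤ p * e + q * d) : e' ≤ -(b * (1 - q) - p) * e := by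
  have absorbed : (1 - q) * (b * e) ≤ (1 - q) * d :=
    mul_le_mul_of_nonneg_left hed (sub_nonneg.2 hq)
  linarith

theorem rpow_eq_rpow_sub_one_mul {x r : ℝ} (hx : 0 ≤ x) (hr : r ≠ 0) : x ^ r = x ^ (r - 1) * x := by
  rw [← Real.rpow_add_one' hx (by simpa using hr), sub_add_cancel]

theorem monotoneOn_const_mul_rpow_add_rpow {a r s : ℝ} (ha : 0 ≤ a) (hr : 0 ≤ r) (hs : 0 ≤ s) :
    MonotoneOn (fun x : ℝ => a * (x ^ r + x ^ s)) (Ici 0) :=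
  fun _ hx _ hy hxy => mul_le_mul_of_nonneg_left
    (add_le_add (Real.monotoneOn_rpow_Ici_of_exponent_nonneg hr hx hy hxy)
      (Real.monotoneOn_rpow_Ici_of_exponent_nonneg hs hx hy hxy)) ha

theorem decay_of_energy_dissipation_two_powers_general {E D E' f g : ℝ → ℝ} {b c : ℝ}
    (hE₀ : ∀ t ≥ 0, 0 ≤ E t) (hD₀ : ∀ t ≥ 0, 0 ≤ D t)
    (hE : ∀ t ≥ 0, HasDerivWithinAt E (E' t) (Ici 0) t)
    (hf : MonotoneOn f (Icc 0 c)) (hg : MonotoneOn g (Icc 0 c))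
    (hineq : ∀ t ≥ 0, E' t + D t ≤ f (E t) * E t + g (E t) * D t)
    (hED : ∀ t ≥ 0, b * E t ≤ D t) (hgc : g c ≤ 1) (hγ : 0 ≤ b * (1 - g c) - f c)
    (hEc : E 0 < c) :
    ∀ t ≥ 0, E t ≤ E 0 * Real.exp (-(b * (1 - g c) - f c) * t) := by
  intro T hT
  have hc : c ∈ Icc 0 c := right_mem_Icc.2 ((hE₀ 0 le_rfl).trans hEc.le)
  have hcont : ContinuousOn E (Icc 0 T) := fun t ht =>
    (hE t ht.1).continuousWithinAt.mono Icc_subset_Ici_self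
  have hderiv : ∀ t ∈ Ico 0 T, HasDerivWithinAt E (E' t) (Ici t) t := fun t ht =>
    (hE t ht.1).mono (Ici_subset_Ici.2 ht.1)
  have linear_bound : ∀ t ∈ Ico 0 T, E t < c → E' t ≤ -(b * (1 - g c) - f c) * E t := by
    intro t ⟨ht, _⟩ hEt
    have hmem : E t ∈ Icc 0 c := ⟨hE₀ t ht, hEt.le⟩
    refine le_neg_mul_of_add_le_mul_add_mul hgc (hED t ht) ((hineq t ht).trans ?_)
    exact add_le_add (mul_le_mul_of_nonneg_right (hf hmem hc hEt.le) (hE₀ t ht))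
      (mul_le_mul_of_nonneg_right (hg hmem hc hEt.le) (hD₀ t ht))
  simpa only [sub_zero] using le_mul_exp_of_deriv_right_le_mul_of_lt hcont hderiv
    (fun t ht => hE₀ t ht.1) (neg_nonpos.2 hγ) hEc linear_bound T (right_mem_Icc.2 hT)

/-- **Corollary 3.13**: if `E' + D ≤ a (E^{α₁} + E^{α₂} + (E^{β₁} + E^{β₂}) D)` and
`b E ≤ D` on `[0, ∞)`, then for every `c₀ > 0` with `1 - a (c₀^{β₁} + c₀^{β₂}) > 0` and
`γ := b (1 - a (c₀^{β₁} + c₀^{β₂})) - a (c₀^{α₁-1} + c₀^{α₂-1}) > 0`, one has: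
`E(0) < c₀` implies `E(t) ≤ E(0) e^{-γ t}` for all `t ≥ 0`. -/
theorem decay_of_energy_dissipation_two_powers (E D E' : ℝ → ℝ)
    (hEpos : ∀ t ≥ (0:ℝ), 0 ≤ E t) (hDpos : ∀ t ≥ (0:ℝ), 0 ≤ D t)
    (hE : ∀ t ≥ (0:ℝ), HasDerivWithinAt E (E' t) (Ici 0) t)
    (hD : DifferentiableOn ℝ D (Ici 0))
    (a b α₁ α₂ β₁ β₂ : ℝ) (ha : 0 < a) (hb : 0 < b)
    (hα₁ : 1 < α₁) (hα₂ : 1 < α₂) (hβ₁ : 0 < β₁) (hβ₂ : 0 < β₂)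
    (hineq : ∀ t ≥ (0:ℝ), E' t + D t ≤
      a * (E t ^ α₁ + E t ^ α₂ + (E t ^ β₁ + E t ^ β₂) * D t))
    (hED : ∀ t ≥ (0:ℝ), b * E t ≤ D t)
    (c₀ : ℝ) (hc₀ : 0 < c₀) (h1 : 0 < 1 - a * (c₀ ^ β₁ + c₀ ^ β₂))
    (hγ : 0 < b * (1 - a * (c₀ ^ β₁ + c₀ ^ β₂)) - a * (c₀ ^ (α₁ - 1) + c₀ ^ (α₂ - 1))) :
    E 0 < c₀ → ∀ t ≥ (0:ℝ), E t ≤ E 0 *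
      Real.exp (-(b * (1 - a * (c₀ ^ β₁ + c₀ ^ β₂))
        - a * (c₀ ^ (α₁ - 1) + c₀ ^ (α₂ - 1))) * t) := by
  have hf := monotoneOn_const_mul_rpow_add_rpow ha.le (sub_pos.2 hα₁).le (sub_pos.2 hα₂).le
  have hg := monotoneOn_const_mul_rpow_add_rpow ha.le hβ₁.le hβ₂.le
  have hfactored : ∀ t ≥ 0, E' t + D t ≤ a * (E t ^ (α₁ - 1) + E t ^ (α₂ - 1)) * E t +
      a * (E t ^ β₁ + E t ^ β₂) * D t := fun t ht => (hineq t ht).trans_eq <| by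
    rw [rpow_eq_rpow_sub_one_mul (hEpos t ht) (zero_lt_one.trans hα₁).ne',
      rpow_eq_rpow_sub_one_mul (hEpos t ht) (zero_lt_one.trans hα₂).ne']
    ring
  exact decay_of_energy_dissipation_two_powers_general hEpos hDpos hE
    (hf.mono Icc_subset_Ici_self) (hg.mono Icc_subset_Ici_self) hfactored hED
    (sub_pos.1 h1).le hγ.le
end
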